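/- Let d ≥ 1 and let (p,q) be an admissible pair with q < ∞ and γ_{p,q} = 0, and let p', q' be the conjugate exponents of p, q. Then there exists C > 0 such that for every Schwartz function F on ℝ^{1+d}, ‖ ∫_ℝ (e^{-isΔ²}F(s,·)) ds ‖_{L²(ℝ^d)} ≤ C ‖F‖_{L^{p'}(ℝ,L^{q'})}. -/

import Mathlib

open MeasureTheory Real Complex
open scoped FourierTransform ENNReal SchwartzMap RealInnerProductSpace

/-- A pair `(p,q)` is admissible if `p,q ∈ [2,∞]`, `(p,q,d) ≠ (2,∞,2)` and
`2/p + d/q ≤ d/2` (with `1/∞ = 0`). -/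
def Admissible (d : ℕ) (p q : ℝ≥0∞) : Prop :=
  2 ≤ p ∧ 2 ≤ q ∧ ¬(p = 2 ∧ q = ∞ ∧ d = 2) ∧
    2 / p + (d : ℝ≥0∞) / q ≤ (d : ℝ≥0∞) / 2

/-- The exponent `γ_{p,q} = d/2 - d/q - 4/p` (with `1/∞ = 0`). -/
noncomputable def gammaExp (d : ℕ) (p q : ℝ≥0∞) : ℝ :=
  (d : ℝ) / 2 - (d : ℝ) / q.toReal - 4 / p.toReal

/-- `L^p`-in-time norm on a set `I` of an `ℝ≥0∞`-valued function, with the usual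
essential supremum convention when `p = ∞`. -/
noncomputable def timeLp (p : ℝ≥0∞) (I : Set ℝ) (g : ℝ → ℝ≥0∞) : ℝ≥0∞ :=
  if p = ∞ then essSup g (MeasureTheory.volume.restrict I)
  else (∫⁻ t in I, g t ^ p.toReal) ^ (1 / p.toReal)

/-- The mixed norm `‖u‖_{L^p(I, L^q)}`. -/
noncomputable def mixedLp {d : ℕ} (p q : ℝ≥0∞) (I : Set ℝ)
    (u : ℝ → EuclideanSpace ℝ (Fin d) → ℂ) : ℝ≥0∞ :=
  timeLp p I fun t => eLpNorm (u t) q MeasureTheory.volume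

/-- The fourth-order Schrödinger propagator
`(e^{itΔ²}u₀)(x) = ∫ e^{2πi x·ξ} e^{it(2π|ξ|)⁴} û₀(ξ) dξ`. -/
noncomputable def prop4 {d : ℕ} (t : ℝ) (u₀ : EuclideanSpace ℝ (Fin d) → ℂ)
    (x : EuclideanSpace ℝ (Fin d)) : ℂ :=
  ∫ ξ : EuclideanSpace ℝ (Fin d),
    Complex.exp (2 * Real.pi * Complex.I * ((⟪x, ξ⟫ : ℝ) : ℂ)) *
      Complex.exp (Complex.I * (t : ℂ) * ((2 * Real.pi * ‖ξ‖ : ℝ) : ℂ) ^ 4) * 𝓕 u₀ ξ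

/-- The homogeneous Sobolev norm `‖f‖_{Ḣ^γ}`, valued in `[0,∞]`. -/
noncomputable def homSobNorm {d : ℕ} (γ : ℝ) (f : EuclideanSpace ℝ (Fin d) → ℂ) : ℝ≥0∞ :=
  (∫⁻ ξ : EuclideanSpace ℝ (Fin d),
      (‖ξ‖₊ : ℝ≥0∞) ^ (2 * γ) * (‖𝓕 f ξ‖₊ : ℝ≥0∞) ^ (2 : ℝ)) ^ ((1 : ℝ) / 2)


namespace Stri
/-- quartic beats cubic -/
lemma quartic_bound (c C : ℝ) (hc : 0 < c) (hC : 0 ≤ C) :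
    ∃ K : ℝ, ∀ m : ℝ, 0 ≤ m → -c * m ^ 4 + C * (1 + m) ^ 3 ≤ K - m ^ 2 := by
  refine ⟨C * (2 + (8 * C + 1) / c + 1/c) ^ 3 + (2 + (8 * C + 1) / c + 1/c)^2, fun m hm => ?_⟩
  set L := 2 + (8 * C + 1) / c + 1/c with hL
  have hL1 : 1 ≤ L := by
    have : 0 ≤ (8 * C + 1) / c := by positivity
    have : 0 ≤ 1 / c := by positivity
    linarith
  have hL2 : 8 * C + 1 ≤ c * L := by
    have h1 : c * ((8 * C + 1) / c) = 8 * C + 1 := by field_simp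
    have h2 : c * (1/c) = 1 := by field_simp
    rw [hL]; nlinarith
  by_cases h : 1 + m ≤ L
  · have h3 : (1 + m)^3 ≤ L ^ 3 := by gcongr
    have h4 : m ^ 2 ≤ L ^ 2 := by
      have : m ≤ L := by linarith
      gcongr
    have : 0 ≤ c * m ^ 4 := by positivity
    have := mul_le_mul_of_nonneg_left h3 hC
    nlinarith
  · push Not at h
    have hm1 : 1 ≤ m := by
      have : 2 ≤ L := by
        have : 0 ≤ (8 * C + 1) / c := by positivity
        have : 0 ≤ 1 / c := by positivity
        linarith
      linarith
    have h3 : (1 + m)^3 ≤ (2 * m)^3 := by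
      gcongr; linarith
    have h5 : 8 * C + 2 ≤ c * (1 + m) := by
      have h1 : c * ((8 * C + 1) / c) = 8 * C + 1 := by field_simp
      have h2 : c * (1/c) = 1 := by field_simp
      have : c * L = 2 * c + (8 * C + 1) + 1 := by rw [hL]; linarith
      nlinarith
    have h6 : 8 * C + 1 ≤ c * m := by
      have h1 : c * ((8 * C + 1) / c) = 8 * C + 1 := by field_simp
      have h2 : c * (1/c) = 1 := by field_simp
      have : c * L = 2 * c + (8 * C + 1) + 1 := by rw [hL]; linarith
      nlinarith
    have h7 : (8 * C + 1) * m ^ 3 ≤ c * m * m ^ 3 := by gcongr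
    have h8 : m ^ 2 ≤ m ^ 3 := by
      apply pow_le_pow_right₀ hm1; norm_num
    have := mul_le_mul_of_nonneg_left h3 hC
    have : 0 ≤ C * L ^ 3 + L ^ 2 := by positivity
    nlinarith

variable {d : ℕ}

lemma integrable_exp_neg_sq (K : ℝ) :
    Integrable (fun v : EuclideanSpace ℝ (Fin d) => Real.exp (K - ‖v‖ ^ 2)) := by
  have h := (GaussianFourier.integrable_cexp_neg_mul_sq_norm_add (V := EuclideanSpace ℝ (Fin d))
    (b := 1) (by simp) 0 0).norm
  have h2 := h.const_mul (Real.exp K)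
  refine h2.congr (Filter.Eventually.of_forall fun v => ?_)
  simp only [Complex.norm_exp]
  rw [← Real.exp_add]
  congr 1
  simp
  norm_cast

lemma integrable_exp_quartic (c C : ℝ) (hc : 0 < c) (hC : 0 ≤ C) :
    Integrable (fun v : EuclideanSpace ℝ (Fin d) => Real.exp (-c * ‖v‖ ^ 4 + C * (1 + ‖v‖) ^ 3)) := by
  obtain ⟨K, hK⟩ := quartic_bound c C hc hC
  refine (integrable_exp_neg_sq (d := d) K).mono' (by fun_prop) (Filter.Eventually.of_forall fun v => ?_)
  rw [Real.norm_eq_abs, abs_of_pos (Real.exp_pos _)]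
  exact Real.exp_le_exp.2 (hK _ (norm_nonneg _))


/-- phase on complexified space -/
noncomputable def ph (β : ℂ) (R s n : ℝ) (ω : ℂ) : ℂ :=
  -β * ((R:ℂ) ^ 2 + 2 * ω * s + ω ^ 2 * n) ^ 2 + I * (4 * (R:ℂ) ^ 4 + 4 * (R:ℂ) ^ 2 * s * ω)

/-- derivative of the phase -/
noncomputable def ph' (β : ℂ) (R s n : ℝ) (ω : ℂ) : ℂ :=
  -β * (2 * ((R:ℂ) ^ 2 + 2 * ω * s + ω ^ 2 * n) * (2 * s + 2 * ω * n)) + I * (4 * (R:ℂ) ^ 2 * s)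

lemma hasDerivAt_ph (β : ℂ) (R s n : ℝ) (ω : ℂ) :
    HasDerivAt (ph β R s n) (ph' β R s n ω) ω := by
  unfold ph ph'
  have h0 := hasDerivAt_id ω
  have h1 : HasDerivAt (fun ω : ℂ => (R:ℂ) ^ 2 + 2 * ω * s + ω ^ 2 * n) (2 * s + 2 * ω * n) ω := by
    have := (((h0.const_mul (2:ℂ)).mul_const (s:ℂ)).const_add ((R:ℂ)^2)).add
      ((h0.pow 2).mul_const (n:ℂ))
    refine this.congr_deriv ?_
    simp
  have h2 := (h1.pow 2).const_mul (-β)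
  have h3 := ((h0.const_mul (4 * (R:ℂ)^2 * s)).const_add (4 * (R:ℂ)^4)).const_mul I
  refine (h2.add h3).congr_deriv ?_
  simp

/-- the region -/
def Ureg (ε : ℝ) : Set ℂ := {ω | 9/10 < ω.re ∧ ω.re < 11/10 ∧ -(1/5) < ω.im ∧ ω.im < ε / 64}

lemma Ureg_norm {ε : ℝ} (hε1 : ε ≤ 1) {ω : ℂ} (h : ω ∈ Ureg ε) : ‖ω‖ ≤ 2 := by
  obtain ⟨h1, h2, h3, h4⟩ := h
  refine (Complex.norm_le_abs_re_add_abs_im ω).trans ?_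
  have : |ω.re| ≤ 11/10 := abs_le.2 ⟨by linarith, by linarith⟩
  have : |ω.im| ≤ 1/5 := abs_le.2 ⟨by linarith, by linarith⟩
  linarith

lemma Ureg_re {ε : ℝ} (hε : 0 < ε) (hε1 : ε ≤ 1) {ω : ℂ} (h : ω ∈ Ureg ε) :
    ε / 8 ≤ (((ε:ℂ) + I) * ω ^ 4).re := by
  obtain ⟨h1, h2, h3, h4⟩ := h
  obtain ⟨x, y⟩ := ω
  simp only at h1 h2 h3 h4
  have e : (((ε:ℂ) + I) * (⟨x, y⟩ : ℂ) ^ 4).re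
      = ε * (x^4 - 6 * x^2 * y^2 + y^4) - 4 * x * y * (x^2 - y^2) := by
    simp [pow_succ, Complex.mul_re, Complex.mul_im]; ring
  rw [e]
  have hx2 : 81/100 < x^2 := by nlinarith
  have hx3 : x^2 < 121/100 := by nlinarith
  have hy2 : y^2 ≤ 1/25 := by nlinarith
  have hy0 : 0 ≤ y^2 := sq_nonneg y
  have hA : 1/4 ≤ x^4 - 6 * x^2 * y^2 + y^4 := by nlinarith [sq_nonneg (y^2), sq_nonneg (x^2)]
  have hB : 0 ≤ 4 * x * (x^2 - y^2) := by
    apply mul_nonneg (by linarith); linarith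
  have hB2 : 4 * x * (x^2 - y^2) ≤ 8 := by nlinarith
  have hC : 4 * x * y * (x^2 - y^2) ≤ ε / 8 := by
    have e2 : 4 * x * y * (x^2 - y^2) = y * (4 * x * (x^2 - y^2)) := by ring
    rw [e2]
    by_cases hy : 0 ≤ y
    · nlinarith
    · push Not at hy
      nlinarith
  nlinarith


lemma ph_re_bound {ε : ℝ} (hε : 0 < ε) (hε1 : ε ≤ 1) (R : ℝ) (hR : 0 ≤ R) :
    ∃ C : ℝ, 0 ≤ C ∧ ∀ ω ∈ Ureg ε, ∀ s m : ℝ, 0 ≤ m → |s| ≤ R * m →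
      (ph ((ε:ℂ) + I) R s (m^2) ω).re ≤ -(ε/8) * m ^ 4 + C * (1 + m) ^ 3 := by
  refine ⟨2 * (32 * R + 24 * R ^2 + 8 * R^3 + R^4) + 4 * R^4 + 8 * R ^ 3, by positivity, ?_⟩
  intro ω hω s m hm hs
  have hre := Ureg_re hε hε1 hω
  have hn := Ureg_norm hε1 hω
  set β := (ε:ℂ) + I with hβ
  have hβn : ‖β‖ ≤ 2 := by
    refine (norm_add_le _ _).trans ?_
    simp [abs_of_pos hε]; linarith
  have e : ph β R s (m^2) ω = -(((m^4:ℝ):ℂ) * (β * ω ^ 4)) +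
      (-β * (4 * ω^3 * s * m^2 + ω^2 * (2 * R^2 * m^2 + 4 * s ^2) + 4 * ω * s * R^2 + R^4)
        + I * (4 * (R:ℂ) ^ 4 + 4 * (R:ℂ) ^ 2 * s * ω)) := by
    unfold ph; push_cast; ring
  rw [e, Complex.add_re, Complex.neg_re, Complex.re_ofReal_mul]
  have hw2 : ‖ω‖^2 ≤ 4 := by nlinarith [norm_nonneg ω]
  have hw3 : ‖ω‖^3 ≤ 8 := by
    calc ‖ω‖^3 ≤ 2^3 := by gcongr
    _ = 8 := by norm_num
  have hlow : ‖-β * (4 * ω^3 * s * m^2 + ω^2 * (2 * R^2 * m^2 + 4 * s ^2) + 4 * ω * s * R^2 + R^4)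
        + I * (4 * (R:ℂ) ^ 4 + 4 * (R:ℂ) ^ 2 * s * ω)‖ ≤
        2 * (4 * 8 * (R * m) * m^2 + 4 * (2 * R^2*m^2 + 4 * (R*m)^2) + 4 * 2 * (R * m) * R^2 + R^4)
        + (4 * R^4 + 4 * R^2 * (R * m) * 2) := by
    refine (norm_add_le _ _).trans (add_le_add ?_ ?_)
    · rw [norm_mul, norm_neg]
      refine mul_le_mul hβn ?_ (norm_nonneg _) (by norm_num)
      refine (norm_add_le _ _).trans (add_le_add ((norm_add_le _ _).trans (add_le_add ((norm_add_le _ _).trans (add_le_add ?_ ?_)) ?_)) ?_)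
      · simp only [norm_mul, norm_pow, Complex.norm_real, Real.norm_eq_abs, Complex.norm_ofNat, abs_of_nonneg hm]
        gcongr
      · simp only [norm_mul, norm_pow]
        refine mul_le_mul hw2 ?_ (norm_nonneg _) (by norm_num)
        refine (norm_add_le _ _).trans (add_le_add ?_ ?_)
        · simp [abs_of_nonneg hm, abs_of_nonneg hR]
        · simp only [norm_mul, norm_pow, Complex.norm_real, Real.norm_eq_abs, Complex.norm_ofNat]
          gcongr
      · simp only [norm_mul, norm_pow, Complex.norm_real, Real.norm_eq_abs, Complex.norm_ofNat, abs_of_nonneg hR]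
        gcongr
      · simp [abs_of_nonneg hR]
    · rw [norm_mul, Complex.norm_I, one_mul]
      refine (norm_add_le _ _).trans (add_le_add ?_ ?_)
      · simp [abs_of_nonneg hR]
      · simp only [norm_mul, norm_pow, Complex.norm_real, Real.norm_eq_abs, Complex.norm_ofNat, abs_of_nonneg hR]
        gcongr
  have hlow2 := (Complex.re_le_norm _).trans hlow
  have hmain : -(m^4 * (β * ω^4).re) ≤ -(ε/8) * m^4 := by
    have : 0 ≤ m^4 := by positivity
    nlinarith
  have hm1 : m ≤ (1+m)^3 := by nlinarith [pow_nonneg hm 3, pow_nonneg hm 2]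
  have hm2 : m^2 ≤ (1+m)^3 := by nlinarith [pow_nonneg hm 3, pow_nonneg hm 2]
  have hm3 : m^3 ≤ (1+m)^3 := by nlinarith [pow_nonneg hm 3, pow_nonneg hm 2]
  have hm0 : 1 ≤ (1+m)^3 := by nlinarith [pow_nonneg hm 3, pow_nonneg hm 2]
  refine (add_le_add hmain hlow2).trans ?_
  refine add_le_add le_rfl ?_
  have a1 := mul_le_mul_of_nonneg_left hm3 hR
  have a2 := mul_le_mul_of_nonneg_left hm2 (pow_nonneg hR 2)
  have a3 := mul_le_mul_of_nonneg_left hm1 (pow_nonneg hR 3)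
  have a4 := mul_le_mul_of_nonneg_left hm0 (pow_nonneg hR 4)
  nlinarith

lemma ph'_bound {ε : ℝ} (hε : 0 < ε) (hε1 : ε ≤ 1) (R : ℝ) (hR : 0 ≤ R) :
    ∃ A : ℝ, 0 ≤ A ∧ ∀ ω ∈ Ureg ε, ∀ s m : ℝ, 0 ≤ m → |s| ≤ R * m →
      ‖ph' ((ε:ℂ) + I) R s (m^2) ω‖ ≤ A * ((1 + m) ^ 3) ^ 2 := by
  refine ⟨2 * (2 * (R^2 + 4 * R + 4) * (2 * R + 4)) + 4 * R^3, by positivity, ?_⟩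
  intro ω hω s m hm hs
  have hn := Ureg_norm hε1 hω
  set β := (ε:ℂ) + I with hβ
  have hβn : ‖β‖ ≤ 2 := by
    refine (norm_add_le _ _).trans ?_
    simp [abs_of_pos hε]; linarith
  have hw2 : ‖ω‖^2 ≤ 4 := by nlinarith [norm_nonneg ω]
  have h1 : ‖ph' β R s (m^2) ω‖ ≤ 2 * (2 * (R^2 + 2 * 2 * (R * m) + 4 * m^2) * (2 * (R * m) + 2 * 2 * m^2)) + 4 * R^2 * (R*m) := by
    unfold ph'
    refine (norm_add_le _ _).trans (add_le_add ?_ ?_)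
    · rw [norm_mul, norm_neg]
      refine mul_le_mul hβn ?_ (norm_nonneg _) (by norm_num)
      rw [norm_mul, norm_mul, Complex.norm_ofNat]
      gcongr
      · refine (norm_add_le _ _).trans (add_le_add ((norm_add_le _ _).trans (add_le_add ?_ ?_)) ?_)
        · simp [abs_of_nonneg hR]
        · simp only [norm_mul, Complex.norm_real, Real.norm_eq_abs, Complex.norm_ofNat]
          gcongr
        · simp only [norm_mul, norm_pow, Complex.norm_real, Real.norm_eq_abs]
          rw [abs_of_nonneg hm]
          gcongr
      · refine (norm_add_le _ _).trans (add_le_add ?_ ?_)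
        · simp only [norm_mul, Complex.norm_real, Real.norm_eq_abs, Complex.norm_ofNat]
          gcongr
        · simp only [norm_mul, Complex.norm_real, Real.norm_eq_abs, Complex.norm_ofNat]
          rw [abs_of_nonneg (by positivity : 0 ≤ m^2)]
          gcongr
    · simp only [norm_mul, norm_pow, Complex.norm_real, Real.norm_eq_abs, Complex.norm_ofNat, abs_of_nonneg hR, Complex.norm_I, one_mul]
      gcongr
  refine h1.trans ?_
  have hk : ∀ k ≤ 6, m^k ≤ ((1+m)^3)^2 := by
    intro k hk
    rw [← pow_mul]
    calc m^k ≤ (1+m)^k := by gcongr; linarith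
    _ ≤ (1+m)^(3*2) := pow_le_pow_right₀ (by linarith) hk
  have b1 := hk 1 (by norm_num)
  have b2 := hk 2 (by norm_num)
  have b3 := hk 3 (by norm_num)
  have b4 := hk 4 (by norm_num)
  rw [pow_one] at b1
  set T := ((1+m)^3)^2
  have e : 2 * (2 * (R^2 + 2 * 2 * (R * m) + 4 * m^2) * (2 * (R * m) + 2 * 2 * m^2)) + 4 * R^2 * (R*m)
     = (4 * R^2 * 2 * R + 4 * R^3) * m + (16 * R^2 + 32 * R^2) * m^2 + (64 * R + 32 * R) * m^3 + 64 * m^4 := by ring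
  rw [e]
  have : (4 * R^2 * 2 * R + 4 * R^3) * m + (16 * R^2 + 32 * R^2) * m^2 + (64 * R + 32 * R) * m^3 + 64 * m^4 ≤
    (4 * R^2 * 2 * R + 4 * R^3) * T + (16 * R^2 + 32 * R^2) * T + (64 * R + 32 * R) * T + 64 * T := by gcongr
  refine this.trans (le_of_eq_of_le (b := ((12 * R^3) + 48 * R^2 + 96 * R + 64) * T) (by ring) ?_)
  have hT : 0 ≤ T := by positivity
  apply mul_le_mul_of_nonneg_right _ hT
  nlinarith [pow_nonneg hR 2, pow_nonneg hR 3]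

lemma ph_final {ε : ℝ} (hε : 0 < ε) (hε1 : ε ≤ 1) (R s n : ℝ) (hn : 0 ≤ n) (hs : s ^ 2 ≤ R^2 * n) :
    (ph ((ε:ℂ) + I) R s n (⟨1, -(1/10)⟩ : ℂ)).re ≤ - (2/25) * n ^ 2 := by
  have e : (ph ((ε:ℂ) + I) R s n (⟨1, -(1/10)⟩ : ℂ)).re =
     -ε * ((R^2 + 2 * s + (99/100) * n)^2 - ((s + n)/5)^2) + (2 * (R^2 + 2 * s + (99/100) * n) * (-((s+n)/5)) + 2/5 * R^2 * s) := by
    unfold ph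
    simp [pow_succ, Complex.mul_re, Complex.mul_im]; ring
  rw [e]
  have h1 : -ε * ((R^2 + 2 * s + (99/100) * n)^2 - ((s + n)/5)^2) ≤ ((s+n)/5)^2 := by
    nlinarith [sq_nonneg (R^2 + 2 * s + (99/100) * n), sq_nonneg ((s+n)/5)]
  have h2 : ((s+n)/5)^2 + (2 * (R^2 + 2 * s + (99/100) * n) * (-((s+n)/5)) + 2/5 * R^2 * s) ≤ - (2/25) * n ^ 2 := by
    nlinarith [sq_nonneg (s + n/2), sq_nonneg n]
  linarith
end Stri

namespace Stri
variable {d : ℕ}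

lemma abs_inner_le (x v : EuclideanSpace ℝ (Fin d)) : |⟪x, v⟫| ≤ ‖x‖ * ‖v‖ := abs_real_inner_le_norm x v

/-- complexified integrand -/
noncomputable def fI (β : ℂ) (x : EuclideanSpace ℝ (Fin d)) (ω : ℂ) (v : EuclideanSpace ℝ (Fin d)) : ℂ :=
  cexp (ph β ‖x‖ ⟪x, v⟫ (‖v‖^2) ω)

lemma continuous_fI (β : ℂ) (x : EuclideanSpace ℝ (Fin d)) (ω : ℂ) : Continuous (fI β x ω) := by
  unfold fI ph
  fun_prop

lemma isOpen_Ureg (ε : ℝ) : IsOpen (Ureg ε) := by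
  unfold Ureg
  simp only [Set.ofPred_and]
  refine (isOpen_lt continuous_const Complex.continuous_re).inter ((isOpen_lt Complex.continuous_re continuous_const).inter
    ((isOpen_lt continuous_const Complex.continuous_im).inter (isOpen_lt Complex.continuous_im continuous_const)))

lemma convex_Ureg (ε : ℝ) : Convex ℝ (Ureg ε) := by
  unfold Ureg
  simp only [Set.ofPred_and]
  exact (convex_halfSpace_re_gt _).inter ((convex_halfSpace_re_lt _).inter
    ((convex_halfSpace_im_gt _).inter (convex_halfSpace_im_lt _)))

lemma integrable_fI {ε : ℝ} (hε : 0 < ε) (hε1 : ε ≤ 1) (x : EuclideanSpace ℝ (Fin d)) {ω : ℂ} (hω : ω ∈ Ureg ε) :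
    Integrable (fI ((ε:ℂ) + I) x ω) := by
  obtain ⟨C, hC, h⟩ := ph_re_bound hε hε1 ‖x‖ (norm_nonneg x)
  refine (integrable_exp_quartic (d := d) (ε/8) C (by positivity) hC).mono'
    (continuous_fI _ _ _).aestronglyMeasurable (Filter.Eventually.of_forall fun v => ?_)
  unfold fI
  rw [Complex.norm_exp]
  exact Real.exp_le_exp.2 (h ω hω _ _ (norm_nonneg v) (abs_inner_le x v))

lemma hasDerivAt_int_fI {ε : ℝ} (hε : 0 < ε) (hε1 : ε ≤ 1) (x : EuclideanSpace ℝ (Fin d)) {ω : ℂ} (hω : ω ∈ Ureg ε) :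
    DifferentiableAt ℂ (fun ω => ∫ v, fI ((ε:ℂ) + I) x ω v) ω := by
  obtain ⟨C, hC, h⟩ := ph_re_bound hε hε1 ‖x‖ (norm_nonneg x)
  obtain ⟨A, hA, h'⟩ := ph'_bound hε hε1 ‖x‖ (norm_nonneg x)
  have key := hasDerivAt_integral_of_dominated_loc_of_deriv_le (μ := volume) (x₀ := ω)
    (F := fun ω v => fI ((ε:ℂ) + I) x ω v)
    (F' := fun ω v => fI ((ε:ℂ) + I) x ω v * ph' ((ε:ℂ) + I) ‖x‖ ⟪x, v⟫ (‖v‖^2) ω)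
    (bound := fun v => (A * 2) * Real.exp (-(ε/8) * ‖v‖ ^ 4 + (C+1) * (1 + ‖v‖) ^ 3))
    ((isOpen_Ureg ε).mem_nhds hω)
    (Filter.Eventually.of_forall fun ω => (continuous_fI _ _ _).aestronglyMeasurable)
    (integrable_fI hε hε1 x hω) ?_ ?_ ?_ ?_
  · exact key.2.differentiableAt
  · refine Continuous.aestronglyMeasurable ?_
    refine (continuous_fI _ _ _).mul ?_
    unfold ph'; fun_prop
  · refine Filter.Eventually.of_forall fun v ω hω => ?_
    rw [norm_mul]
    unfold fI
    rw [Complex.norm_exp]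
    have h1 := Real.exp_le_exp.2 (h ω hω _ _ (norm_nonneg v) (abs_inner_le x v))
    have h2 := h' ω hω _ _ (norm_nonneg v) (abs_inner_le x v)
    have hy : 0 ≤ (1 + ‖v‖)^3 := by positivity
    have h3 := Real.quadratic_le_exp_of_nonneg hy
    have h4 : ‖ph' ((ε:ℂ) + I) ‖x‖ ⟪x, v⟫ (‖v‖^2) ω‖ ≤ A * (2 * Real.exp ((1 + ‖v‖)^3)) := by
      refine h2.trans (mul_le_mul_of_nonneg_left ?_ hA)
      nlinarith
    refine (mul_le_mul h1 h4 (norm_nonneg _) (Real.exp_pos _).le).trans (le_of_eq ?_)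
    rw [show -(ε/8) * ‖v‖ ^ 4 + (C+1) * (1 + ‖v‖) ^ 3 = (-(ε/8) * ‖v‖ ^ 4 + C * (1 + ‖v‖) ^ 3) + (1 + ‖v‖)^3 by ring,
      Real.exp_add _ ((1 + ‖v‖)^3)]
    generalize Real.exp (-(ε/8) * ‖v‖ ^ 4 + C * (1 + ‖v‖) ^ 3) = X
    generalize Real.exp ((1 + ‖v‖)^3) = Y
    ring
  · exact (integrable_exp_quartic (d := d) (ε/8) (C+1) (by positivity) (by positivity)).const_mul _
  · exact Filter.Eventually.of_forall fun v ω hω => (hasDerivAt_ph _ _ _ _ ω).cexp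

lemma int_fI_real {ε : ℝ} (x : EuclideanSpace ℝ (Fin d)) {r : ℝ} (hr : 0 < r) :
    ((r:ℂ))^d * ∫ v, fI ((ε:ℂ) + I) x r v = ∫ v, fI ((ε:ℂ) + I) x 1 v := by
  set g : EuclideanSpace ℝ (Fin d) → ℂ := fun ξ => cexp (-((ε:ℂ) + I) * ‖ξ‖^4 + I * (4 * ‖x‖^2 * ⟪x, ξ⟫))
  have hg : ∀ r : ℝ, ∀ v, fI ((ε:ℂ) + I) x r v = g (x + r • v) := by
    intro r v
    simp only [fI, g, ph]
    have e1 : ((‖x + r • v‖ : ℝ) : ℂ)^4 = ((‖x‖ : ℂ) ^ 2 + 2 * r * ⟪x, v⟫ + (r:ℂ) ^ 2 * ((‖v‖^2 : ℝ):ℂ))^2 := by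
      norm_cast
      rw [show ‖x + r • v‖^4 = (‖x + r • v‖^2)^2 by ring, norm_add_sq_real, inner_smul_right, norm_smul, mul_pow,
        Real.norm_eq_abs, sq_abs]
      ring
    rw [e1, inner_add_right, inner_smul_right, real_inner_self_eq_norm_sq]
    congr 1
    push_cast
    ring
  have h1 : ∀ r : ℝ, 0 < r → ((r:ℂ))^d * ∫ v, fI ((ε:ℂ) + I) x r v = ∫ v, g v := by
    intro r hr
    simp_rw [hg]
    rw [Measure.integral_comp_smul_of_nonneg volume (fun v => g (x + v)) r (hR := hr.le), integral_add_left_eq_self]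
    simp only [finrank_euclideanSpace, Fintype.card_fin]
    rw [Complex.real_smul]
    push_cast
    rw [← mul_assoc, mul_inv_cancel₀, one_mul]
    exact pow_ne_zero _ (by exact_mod_cast hr.ne')
  rw [h1 r hr, ← h1 1 one_pos]
  simp

lemma int_fI_const {ε : ℝ} (hε : 0 < ε) (hε1 : ε ≤ 1) (x : EuclideanSpace ℝ (Fin d)) {ω : ℂ} (hω : ω ∈ Ureg ε) :
    ω^d * ∫ v, fI ((ε:ℂ) + I) x ω v = ∫ v, fI ((ε:ℂ) + I) x 1 v := by
  have hana : AnalyticOnNhd ℂ (fun ω : ℂ => ω^d * ∫ v, fI ((ε:ℂ) + I) x ω v) (Ureg ε) := by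
    apply DifferentiableOn.analyticOnNhd _ (isOpen_Ureg ε)
    intro ω hω
    exact ((differentiableAt_pow d).mul (hasDerivAt_int_fI hε hε1 x hω)).differentiableWithinAt
  have h1 : (1:ℂ) ∈ Ureg ε := by
    refine ⟨?_, ?_, ?_, ?_⟩ <;> simp <;> norm_num
    exact hε
  refine hana.eqOn_of_preconnected_of_frequently_eq (analyticOnNhd_const (v := ∫ v, fI ((ε:ℂ) + I) x 1 v))
    (convex_Ureg ε).isPreconnected h1 ?_ hω
  have ht : Filter.Tendsto (fun n : ℕ => ((1 + 1/((n:ℝ)+1) : ℝ) : ℂ)) Filter.atTop (nhdsWithin 1 {1}ᶜ) := by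
    apply tendsto_nhdsWithin_iff.2 ⟨?_, ?_⟩
    · have := (tendsto_one_div_add_atTop_nhds_zero_nat (𝕜 := ℝ)).const_add 1
      rw [add_zero] at this
      have h2 := (Complex.continuous_ofReal.tendsto (1:ℝ)).comp this
      rw [Complex.ofReal_one] at h2
      exact h2
    · refine Filter.Eventually.of_forall fun n => ?_
      have : (0:ℝ) < 1/((n:ℝ)+1) := by positivity
      simp only [Set.mem_compl_iff, Set.mem_singleton_iff]
      intro h
      have h := Complex.ofReal_injective (h.trans Complex.ofReal_one.symm)
      linarith
  refine ht.frequently (Filter.Frequently.of_forall fun n => ?_)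
  exact int_fI_real x (by positivity)

lemma disp_aux (d : ℕ) : ∃ C : ℝ, 0 ≤ C ∧ ∀ ε : ℝ, 0 < ε → ε ≤ 1 → ∀ x : EuclideanSpace ℝ (Fin d),
    ‖∫ v, fI ((ε:ℂ) + I) x 1 v‖ ≤ C := by
  refine ⟨2^d * ∫ v : EuclideanSpace ℝ (Fin d), Real.exp (-(2/25) * ‖v‖^4), ?_, ?_⟩
  · have : 0 ≤ ∫ v : EuclideanSpace ℝ (Fin d), Real.exp (-(2/25) * ‖v‖^4) := integral_nonneg fun v => (Real.exp_pos _).le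
    positivity
  intro ε hε hε1 x
  have hω : (⟨1, -(1/10)⟩ : ℂ) ∈ Ureg ε := by
    refine ⟨?_, ?_, ?_, ?_⟩ <;> norm_num
    linarith
  rw [← int_fI_const hε hε1 x hω, norm_mul, norm_pow]
  gcongr
  · exact Ureg_norm hε1 hω
  · refine norm_integral_le_of_norm_le ?_ (Filter.Eventually.of_forall fun v => ?_)
    · simpa using integrable_exp_quartic (d := d) (2/25) 0 (by norm_num) le_rfl
    · unfold fI
      rw [Complex.norm_exp]
      apply Real.exp_le_exp.2
      refine (ph_final hε hε1 _ _ _ (by positivity) ?_).trans (le_of_eq (by ring))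
      rw [← mul_pow, ← sq_abs]
      exact pow_le_pow_left₀ (abs_nonneg _) (abs_inner_le x v) 2

lemma exists_cubic (z : EuclideanSpace ℝ (Fin d)) : ∃ x : EuclideanSpace ℝ (Fin d), (4 * ‖x‖^2) • x = z := by
  by_cases hz : z = 0
  · exact ⟨0, by simp [hz]⟩
  have hz' : 0 < ‖z‖ := norm_pos_iff.2 hz
  set r := (‖z‖/4) ^ ((1:ℝ)/3) with hr
  have hr0 : 0 < r := by positivity
  have hr3 : r^3 = ‖z‖/4 := by
    rw [hr, ← Real.rpow_natCast, ← Real.rpow_mul (by positivity)]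
    norm_num
  refine ⟨(r/‖z‖) • z, ?_⟩
  have hn : ‖(r/‖z‖) • z‖ = r := by
    rw [norm_smul, Real.norm_of_nonneg (by positivity)]
    field_simp
  rw [hn, smul_smul]
  have : 4 * r^2 * (r/‖z‖) = 1 := by
    have : 4 * r^2 * (r/‖z‖) = 4 * r^3 / ‖z‖ := by ring
    rw [this, hr3]; field_simp
  rw [this, one_smul]

lemma disp_unit (d : ℕ) : ∃ C : ℝ, 0 ≤ C ∧ ∀ ε : ℝ, 0 < ε → ∀ z : EuclideanSpace ℝ (Fin d),
    ‖∫ ξ : EuclideanSpace ℝ (Fin d), cexp (-((ε:ℂ) + I) * ‖ξ‖^4 + I * ⟪z, ξ⟫)‖ ≤ C := by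
  obtain ⟨C, hC, h⟩ := disp_aux d
  refine ⟨max C (∫ v : EuclideanSpace ℝ (Fin d), Real.exp (-1 * ‖v‖^4)), le_max_of_le_left hC, ?_⟩
  intro ε hε z
  by_cases hε1 : ε ≤ 1
  · obtain ⟨x, hx⟩ := exists_cubic z
    refine le_trans (le_of_eq ?_) ((h ε hε hε1 x).trans (le_max_left _ _))
    congr 1
    rw [← integral_add_left_eq_self _ x]
    congr 1
    ext v
    simp only [fI, ph, ← hx]
    have e1 : ((‖x + v‖ : ℝ) : ℂ)^4 = ((‖x‖ : ℂ) ^ 2 + 2 * ⟪x, v⟫ + ((‖v‖^2 : ℝ):ℂ))^2 := by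
      norm_cast
      rw [show ‖x + v‖^4 = (‖x + v‖^2)^2 by ring, norm_add_sq_real]
    rw [e1, inner_add_right, inner_smul_left, inner_smul_left, real_inner_self_eq_norm_sq]
    congr 1
    push_cast
    simp
    ring
  · push Not at hε1
    refine le_trans (norm_integral_le_of_norm_le ?_ (Filter.Eventually.of_forall fun v => ?_)) (le_max_right _ _)
    · simpa using integrable_exp_quartic (d := d) 1 0 (by norm_num) le_rfl
    · rw [Complex.norm_exp]
      apply Real.exp_le_exp.2
      have : (-((ε:ℂ) + I) * ‖v‖^4 + I * ⟪z, v⟫).re = -ε * ‖v‖^4 := by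
        have e : ((‖v‖:ℂ))^4 = ((‖v‖^4 : ℝ) : ℂ) := by push_cast; rfl
        rw [e, neg_mul, Complex.add_re, Complex.neg_re, Complex.re_mul_ofReal, Complex.I_mul_re, Complex.ofReal_im]
        simp
      rw [this]
      have : 0 ≤ ‖v‖^4 := by positivity
      nlinarith

lemma disp_pos (d : ℕ) : ∃ C : ℝ, 0 ≤ C ∧ ∀ ε τ : ℝ, 0 < ε → 0 < τ → ∀ z : EuclideanSpace ℝ (Fin d),
    ‖∫ ξ : EuclideanSpace ℝ (Fin d), cexp (-((ε:ℂ) + τ * I) * ‖ξ‖^4 + I * ⟪z, ξ⟫)‖ ≤ C * τ ^ (-((d:ℝ)/4)) := by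
  obtain ⟨C, hC, h⟩ := disp_unit d
  refine ⟨C, hC, fun ε τ hε hτ z => ?_⟩
  set r := τ ^ ((1:ℝ)/4) with hr
  have hr0 : 0 < r := by positivity
  have hr4 : r^4 = τ := by
    rw [hr, ← Real.rpow_natCast, ← Real.rpow_mul (by positivity)]
    norm_num
  have h1 := h (ε/τ) (by positivity) (r⁻¹ • z)
  have e : ∀ ξ : EuclideanSpace ℝ (Fin d), cexp (-((ε:ℂ) + τ * I) * ‖ξ‖^4 + I * ⟪z, ξ⟫) =
     (fun ξ : EuclideanSpace ℝ (Fin d) => cexp (-(((ε/τ : ℝ):ℂ) + I) * ‖ξ‖^4 + I * ⟪r⁻¹ • z, ξ⟫)) (r • ξ) := by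
    intro ξ
    simp only
    rw [norm_smul, Real.norm_of_nonneg hr0.le, inner_smul_left, inner_smul_right]
    congr 1
    have hrc : (r:ℂ)≠ 0 := by exact_mod_cast hr0.ne'
    have hτc : (τ:ℂ)≠ 0 := by exact_mod_cast hτ.ne'
    have hr4c : (r:ℂ)^4 = τ := by exact_mod_cast hr4
    push_cast
    rw [mul_pow, hr4c]
    simp
    field_simp
  rw [integral_congr_ae (Filter.Eventually.of_forall e)]
  have e2 := Measure.integral_comp_smul_of_nonneg volume (fun ξ : EuclideanSpace ℝ (Fin d) =>
    cexp (-(((ε/τ : ℝ):ℂ) + I) * ‖ξ‖^4 + I * ⟪r⁻¹ • z, ξ⟫)) r (hR := hr0.le)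
  rw [e2, norm_smul]
  simp only [finrank_euclideanSpace, Fintype.card_fin]
  rw [Real.norm_of_nonneg (by positivity), mul_comm]
  refine mul_le_mul h1 ?_ (by positivity) hC
  · rw [hr, ← Real.rpow_natCast, ← Real.rpow_mul (by positivity), ← Real.rpow_neg (by positivity)]
    apply le_of_eq; congr 1; ring

/-- dispersive estimate for the regularised kernel -/
theorem disp (d : ℕ) : ∃ C : ℝ, 0 ≤ C ∧ ∀ ε τ : ℝ, 0 < ε → τ ≠ 0 → ∀ z : EuclideanSpace ℝ (Fin d),
    ‖∫ ξ : EuclideanSpace ℝ (Fin d), cexp (-((ε:ℂ) + τ * I) * ‖ξ‖^4 + I * ⟪z, ξ⟫)‖ ≤ C * |τ| ^ (-((d:ℝ)/4)) := by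
  obtain ⟨C, hC, h⟩ := disp_pos d
  refine ⟨C, hC, fun ε τ hε hτ z => ?_⟩
  rcases lt_or_gt_of_ne hτ with h0 | h0
  · have h1 := h ε (-τ) hε (by linarith) (-z)
    rw [abs_of_neg h0]
    refine le_trans (le_of_eq ?_) h1
    rw [← Complex.norm_conj, ← integral_conj]
    congr 2
    ext ξ
    rw [← Complex.exp_conj]
    congr 1
    simp
  · rw [abs_of_pos h0]
    exact h ε τ hε h0 z
end Stri

namespace Stri

/-- Young's inequality in trilinear form -/
lemma young (p p' : ℝ) (hp : 2 ≤ p) (hpp : 1/p + 1/p' = 1) (c c' k : ℝ → ℝ≥0∞)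
    (hc : Measurable c) (hc' : Measurable c') (hk : Measurable k) :
    ∫⁻ z : ℝ × ℝ, k (z.1 - z.2) * (c z.1 * c' z.2) ≤
      (∫⁻ t, k t ^ (p/2)) ^ (2/p) * ((∫⁻ s, c s ^ p') ^ (1/p') * (∫⁻ s, c' s ^ p') ^ (1/p')) := by
  have hp0 : 0 < p := by linarith
  have hpinv : 1/p ≤ 1/2 := one_div_le_one_div_of_le (by norm_num) hp
  have hp'inv : 1/p' = 1 - 1/p := by linarith
  have hp'0 : 0 < p' := by
    have : 0 < 1/p' := by rw [hp'inv]; linarith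
    exact one_div_pos.1 this
  have hα : 0 ≤ 1 - 2/p := by
    have : 2/p = 2 * (1/p) := by ring
    rw [this]; linarith
  set f : Fin 3 → ℝ × ℝ → ℝ≥0∞ := ![fun z => c z.1 ^ p' * c' z.2 ^ p', fun z => c z.1 ^ p' * k (z.1 - z.2) ^ (p/2),
    fun z => c' z.2 ^ p' * k (z.1 - z.2) ^ (p/2)] with hf
  set w : Fin 3 → ℝ := ![1 - 2/p, 1/p, 1/p] with hw
  have hH := ENNReal.lintegral_prod_norm_pow_le (μ := (volume : Measure (ℝ × ℝ))) Finset.univ (f := f) (p := w) ?_ ?_ ?_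
  · simp only [Fin.prod_univ_three, hf, hw, Matrix.cons_val_zero, Matrix.cons_val_one, Matrix.cons_val] at hH
    have e1 : ∀ z : ℝ × ℝ, k (z.1 - z.2) * (c z.1 * c' z.2) =
        (c z.1 ^ p' * c' z.2 ^ p') ^ (1 - 2 / p) * (c z.1 ^ p' * k (z.1 - z.2) ^ (p / 2)) ^ (1 / p) *
        (c' z.2 ^ p' * k (z.1 - z.2) ^ (p / 2)) ^ (1 / p) := by
      intro z
      have g : ∀ x : ℝ≥0∞, x = (x ^ p') ^ (1 - 2/p) * (x ^ p') ^ (1/p) := by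
        intro x
        rw [← ENNReal.rpow_mul, ← ENNReal.rpow_mul, ← ENNReal.rpow_add_of_nonneg _ _ (by positivity) (by positivity)]
        have : p' * (1 - 2/p) + p' * (1/p) = 1 := by
          have : p' * (1 - 2/p) + p' * (1/p) = p' * (1 - 1/p) := by ring
          rw [this, ← hp'inv]; field_simp
        rw [this, ENNReal.rpow_one]
      have g2 : ∀ x : ℝ≥0∞, x = (x ^ (p/2)) ^ (1/p) * (x ^ (p/2)) ^ (1/p) := by
        intro x
        rw [← ENNReal.rpow_mul, ← ENNReal.rpow_add_of_nonneg _ _ (by positivity) (by positivity)]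
        have : p/2 * (1/p) + p/2 * (1/p) = 1 := by field_simp; norm_num
        rw [this, ENNReal.rpow_one]
      rw [ENNReal.mul_rpow_of_nonneg _ _ hα, ENNReal.mul_rpow_of_nonneg _ _ (by positivity : 0 ≤ 1/p),
        ENNReal.mul_rpow_of_nonneg _ _ (by positivity : 0 ≤ 1/p)]
      conv_lhs => rw [g (c z.1), g (c' z.2), g2 (k (z.1 - z.2))]
      ring
    rw [lintegral_congr e1]
    refine hH.trans ?_
    have i0 : ∫⁻ z : ℝ × ℝ, c z.1 ^ p' * c' z.2 ^ p' = (∫⁻ s, c s ^ p') * (∫⁻ s, c' s ^ p') := by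
      rw [Measure.volume_eq_prod]
      exact lintegral_prod_mul (hc.pow_const _).aemeasurable (hc'.pow_const _).aemeasurable
    have i1 : ∫⁻ z : ℝ × ℝ, c z.1 ^ p' * k (z.1 - z.2) ^ (p/2) = (∫⁻ s, c s ^ p') * (∫⁻ t, k t ^ (p/2)) := by
      rw [Measure.volume_eq_prod, lintegral_prod _ (by fun_prop)]
      have : ∀ s, ∫⁻ t, c s ^ p' * k (s - t) ^ (p/2) = c s ^ p' * ∫⁻ t, k t ^ (p/2) := by
        intro s
        rw [lintegral_const_mul _ (by fun_prop)]
        congr 1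
        exact lintegral_sub_left_eq_self (fun t => k t ^ (p/2)) s
      simp_rw [this]
      rw [lintegral_mul_const _ (by fun_prop)]
    have i2 : ∫⁻ z : ℝ × ℝ, c' z.2 ^ p' * k (z.1 - z.2) ^ (p/2) = (∫⁻ s, c' s ^ p') * (∫⁻ t, k t ^ (p/2)) := by
      rw [Measure.volume_eq_prod, lintegral_prod_symm _ (by fun_prop)]
      have : ∀ t, ∫⁻ s, c' t ^ p' * k (s - t) ^ (p/2) = c' t ^ p' * ∫⁻ t, k t ^ (p/2) := by
        intro t
        rw [lintegral_const_mul _ (by fun_prop)]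
        congr 1
        exact lintegral_sub_right_eq_self (fun t => k t ^ (p/2)) t
      simp_rw [this]
      rw [lintegral_mul_const _ (by fun_prop)]
    rw [i0, i1, i2]
    rw [ENNReal.mul_rpow_of_nonneg _ _ hα, ENNReal.mul_rpow_of_nonneg _ _ (by positivity : 0 ≤ 1/p),
        ENNReal.mul_rpow_of_nonneg _ _ (by positivity : 0 ≤ 1/p)]
    have hs : 1/p' = (1 - 2/p) + 1/p := by rw [hp'inv]; ring
    rw [hs, ENNReal.rpow_add_of_nonneg _ _ hα (by positivity), ENNReal.rpow_add_of_nonneg _ _ hα (by positivity),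
      show 2/p = 1/p + 1/p by ring, ENNReal.rpow_add_of_nonneg (x := ∫⁻ t, k t ^ (p/2)) _ _ (by positivity) (by positivity)]
    apply le_of_eq; ring
  · intro i _
    fin_cases i <;> simp [hf] <;> fun_prop
  · simp [hw, Fin.sum_univ_three]; ring
  · intro i _
    fin_cases i <;> simp [hw]
    · linarith
    · exact hp0.le
    · exact hp0.le

/-- local maximal type bound -/
lemma near_bound (p p' : ℝ) (hp : 2 ≤ p) (hpp : 1/p + 1/p' = 1) (c c' : ℝ → ℝ≥0∞)
    (hc : Measurable c) (hc' : Measurable c') (R : ℝ) (hR : 0 < R) :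
    ∫⁻ s, c s * (∫⁻ t in Metric.ball s R, c' t ^ p') ^ (1/p') ≤
      ENNReal.ofReal ((2 * R) ^ (1/p)) * ((∫⁻ s, c s ^ p') ^ (1/p') * (∫⁻ s, c' s ^ p') ^ (1/p')) := by
  have hp0 : 0 < p := by linarith
  have hpinv : 1/p ≤ 1/2 := one_div_le_one_div_of_le (by norm_num) hp
  have hp'inv : 1/p' = 1 - 1/p := by linarith
  have hp'0 : 0 < p' := by
    have : 0 < 1/p' := by rw [hp'inv]; linarith
    exact one_div_pos.1 this
  set A := ∫⁻ s, c' s ^ p' with hA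
  set X : ℝ → ℝ≥0∞ := fun s => ∫⁻ t in Metric.ball s R, c' t ^ p' with hX
  have hXeq : ∀ s, X s = ∫⁻ t, (Metric.ball (0:ℝ) R).indicator 1 (s - t) * c' t ^ p' := by
    intro s
    simp only [hX]
    rw [← lintegral_indicator measurableSet_ball]
    congr 1; ext t
    simp only [Set.indicator, Metric.mem_ball, dist_zero_right, Real.dist_eq, Real.norm_eq_abs]
    rw [abs_sub_comm]
    split_ifs <;> simp
  have hmeas : Measurable (fun z : ℝ × ℝ => (Metric.ball (0:ℝ) R).indicator (1 : ℝ → ℝ≥0∞) (z.1 - z.2) * c' z.2 ^ p') := by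
    apply Measurable.mul
    · exact (measurable_one.indicator measurableSet_ball).comp (measurable_fst.sub measurable_snd)
    · fun_prop
  have hXm : Measurable X := by
    have : X = fun s => ∫⁻ t, (Metric.ball (0:ℝ) R).indicator 1 (s - t) * c' t ^ p' := funext hXeq
    rw [this]
    exact hmeas.lintegral_prod_right'
  have hXint : ∫⁻ s, X s = ENNReal.ofReal (2 * R) * A := by
    simp_rw [hXeq]
    rw [lintegral_lintegral_swap hmeas.aemeasurable]
    have : ∀ t, ∫⁻ s, (Metric.ball (0:ℝ) R).indicator (1 : ℝ → ℝ≥0∞) (s - t) * c' t ^ p' = ENNReal.ofReal (2 * R) * c' t ^ p' := by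
      intro t
      have hm : Measurable fun s : ℝ => (Metric.ball (0:ℝ) R).indicator (1 : ℝ → ℝ≥0∞) (s - t) :=
        (measurable_one.indicator measurableSet_ball).comp (measurable_id.sub_const t)
      rw [lintegral_mul_const _ hm]
      congr 1
      rw [lintegral_sub_right_eq_self (fun s => (Metric.ball (0:ℝ) R).indicator (1 : ℝ → ℝ≥0∞) s) t,
        lintegral_indicator_one measurableSet_ball, Real.volume_ball]
    simp_rw [this]
    rw [lintegral_const_mul _ (by fun_prop)]
  have hXA : ∀ s, X s ≤ A := fun s => setLIntegral_le_lintegral _ _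
  have hH := ENNReal.lintegral_mul_le_Lp_mul_Lq (volume : Measure ℝ) (p := p') (q := p)
    (Real.holderConjugate_iff.2 ⟨?_, ?_⟩) hc.aemeasurable (g := fun s => X s ^ (1/p')) (hXm.pow_const _).aemeasurable
  · refine hH.trans ?_
    rw [mul_left_comm]
    gcongr
    have : ∀ s, (X s ^ (1/p')) ^ p ≤ A ^ (p - 2) * X s := by
      intro s
      rw [← ENNReal.rpow_mul]
      have : 1/p' * p = (p - 2) + 1 := by rw [hp'inv]; field_simp; ring
      rw [this, ENNReal.rpow_add_of_nonneg _ _ (by linarith) zero_le_one, ENNReal.rpow_one]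
      gcongr
      exact hXA s
    calc (∫⁻ s, (X s ^ (1/p')) ^ p) ^ (1/p) ≤ (∫⁻ s, A ^ (p - 2) * X s) ^ (1/p) := by
          gcongr with s; exact this s
      _ = (ENNReal.ofReal (2 * R) * (A ^ (p - 2) * A)) ^ (1/p) := by
          rw [lintegral_const_mul _ hXm, hXint]; congr 1; ring
      _ ≤ _ := by
          rw [ENNReal.mul_rpow_of_nonneg _ _ (by positivity), ENNReal.ofReal_rpow_of_nonneg (by positivity) (by positivity)]
          gcongr
          have : A ^ (p-2) * A = A ^ (p - 1) := by
            conv_lhs => rw [← ENNReal.rpow_one A, ← ENNReal.rpow_mul, ← ENNReal.rpow_add_of_nonneg _ _ (by linarith) zero_le_one]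
            congr 1; ring
          rw [this, ← ENNReal.rpow_mul, hp'inv]
          apply le_of_eq; congr 1; field_simp
  · rw [← one_div_lt_one_div (by positivity) one_pos] 
    rw [hp'inv]; have : 0 < 1/p := by positivity
    rw [div_one]; linarith
  · simpa [add_comm] using hpp

lemma tail_int (a R : ℝ) (ha : 1 < a) (hR : 0 < R) :
    ∫⁻ t : ℝ, ({t : ℝ | R ≤ |t|}.indicator (fun t => ENNReal.ofReal (|t| ^ (-a))) t) ≤
      ENNReal.ofReal (2 * (R ^ (1 - a) / (a - 1))) := by
  have hm : Measurable (fun t : ℝ => ENNReal.ofReal (|t| ^ (-a))) := by fun_prop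
  have hpos : ∫⁻ t in Set.Ioi R, ENNReal.ofReal (|t| ^ (-a)) = ENNReal.ofReal (R ^ (1 - a) / (a - 1)) := by
    have e1 : ∫⁻ t in Set.Ioi R, ENNReal.ofReal (|t| ^ (-a)) = ∫⁻ t in Set.Ioi R, ENNReal.ofReal (t ^ (-a)) := by
      apply setLIntegral_congr_fun measurableSet_Ioi
      intro t ht
      simp only
      rw [abs_of_pos (hR.trans ht)]
    rw [e1, ← ofReal_integral_eq_lintegral_ofReal (integrableOn_Ioi_rpow_of_lt (by linarith) hR)]
    · rw [integral_Ioi_rpow_of_lt (by linarith) hR]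
      congr 1
      rw [show -a + 1 = 1 - a by ring, show 1 - a = -(a-1) by ring, neg_div_neg_eq]
    · exact (ae_restrict_mem measurableSet_Ioi).mono fun t ht => Real.rpow_nonneg (hR.trans ht).le _
  have hIci : ∫⁻ t in Set.Ici R, ENNReal.ofReal (|t| ^ (-a)) = ENNReal.ofReal (R ^ (1 - a) / (a - 1)) := by
    rw [← hpos]; exact setLIntegral_congr Ioi_ae_eq_Ici.symm
  have hIic : ∫⁻ t in Set.Iic (-R), ENNReal.ofReal (|t| ^ (-a)) = ENNReal.ofReal (R ^ (1 - a) / (a - 1)) := by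
    rw [← hIci, ← lintegral_indicator measurableSet_Iic, ← lintegral_indicator measurableSet_Ici,
      ← lintegral_neg_eq_self]
    congr 1; ext t
    simp only [Set.indicator, Set.mem_Iic, Set.mem_Ici, neg_le_neg_iff, abs_neg]
  have hset : {t : ℝ | R ≤ |t|} = Set.Iic (-R) ∪ Set.Ici R := by
    ext t; simp [le_abs, le_neg, or_comm]
  rw [lintegral_indicator (by rw [hset]; exact measurableSet_Iic.union measurableSet_Ici), hset]
  refine (lintegral_union_le _ _ _).trans ?_
  rw [hIci, hIic, two_mul, ENNReal.ofReal_add] <;>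
  · have : 0 < a - 1 := by linarith
    positivity
end Stri

namespace Stri
section
set_option linter.unusedSectionVars false

/-- A jointly measurable family dominated by `h s * g ξ`. -/
structure Dom {X : Type*} [MeasurableSpace X] (μ : Measure X) (h : ℝ → ℝ) (g : X → ℝ) (u : ℝ → X → ℂ) : Prop where
  meas : Measurable (Function.uncurry u)
  hi : Integrable h
  gi : Integrable (fun ξ => g ξ ^ 2) μ
  h0 : ∀ s, 0 ≤ h s
  bd : ∀ s ξ, ‖u s ξ‖ ≤ h s * g ξ

/-- the Gram kernel -/
noncomputable def gk {X : Type*} [MeasurableSpace X] (μ : Measure X) (u v : ℝ → X → ℂ) (s t : ℝ) : ℂ :=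
  ∫ ξ, u s ξ * (starRingEnd ℂ) (v t ξ) ∂μ

variable {X : Type*} [MeasurableSpace X] {μ : Measure X} [SFinite μ] {h : ℝ → ℝ} {g : X → ℝ} {u v : ℝ → X → ℂ}

lemma Dom.meas_s (hu : Dom μ h g u) (s : ℝ) : Measurable (u s) := hu.meas.of_uncurry_left

lemma Dom.meas_xi (hu : Dom μ h g u) (ξ : X) : Measurable (fun s => u s ξ) := hu.meas.of_uncurry_right

lemma Dom.int_t (hu : Dom μ h g u) (ξ : X) : Integrable (fun s => u s ξ) :=
  (hu.hi.mul_const (g ξ)).mono' (hu.meas_xi ξ).aestronglyMeasurable (Filter.Eventually.of_forall fun s => hu.bd s ξ)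

lemma Dom.indicator (hu : Dom μ h g u) {I : Set ℝ} (hI : MeasurableSet I) :
    Dom μ h g (fun s ξ => I.indicator (fun s => u s ξ) s) where
  meas := by
    have : Function.uncurry (fun s ξ => I.indicator (fun s => u s ξ) s) = (Prod.fst ⁻¹' I).indicator (Function.uncurry u) := by
      ext ⟨s, ξ⟩; by_cases hs : s ∈ I <;> simp [Function.uncurry, hs]
    rw [this]
    exact hu.meas.indicator (measurable_fst hI)
  hi := hu.hi
  gi := hu.gi
  h0 := hu.h0
  bd := fun s ξ => by
    by_cases hs : s ∈ I
    · simpa [Set.indicator, hs] using hu.bd s ξ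
    · simpa [Set.indicator, hs] using (norm_nonneg _).trans (hu.bd s ξ)

lemma prod_bd (hu : Dom μ h g u) (hv : Dom μ h g v) (s t : ℝ) (ξ : X) :
    ‖u s ξ * (starRingEnd ℂ) (v t ξ)‖ ≤ g ξ ^ 2 * (h s * h t) := by
  rw [norm_mul, RCLike.norm_conj]
  calc _ ≤ (h s * g ξ) * (h t * g ξ) := mul_le_mul (hu.bd s ξ) (hv.bd t ξ) (norm_nonneg _) ((norm_nonneg _).trans (hu.bd s ξ))
    _ = _ := by ring

lemma prod_meas (hu : Dom μ h g u) (hv : Dom μ h g v) :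
    Measurable (fun z : X × ℝ × ℝ => u z.2.1 z.1 * (starRingEnd ℂ) (v z.2.2 z.1)) := by
  have h1 : Measurable (fun z : X × ℝ × ℝ => u z.2.1 z.1) :=
    hu.meas.comp (f := fun z : X × ℝ × ℝ => (z.2.1, z.1)) (by fun_prop)
  have h2 : Measurable (fun z : X × ℝ × ℝ => v z.2.2 z.1) :=
    hv.meas.comp (f := fun z : X × ℝ × ℝ => (z.2.2, z.1)) (by fun_prop)
  exact h1.mul (Complex.continuous_conj.measurable.comp h2)

lemma prod_int (hu : Dom μ h g u) (hv : Dom μ h g v) :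
    Integrable (fun z : X × ℝ × ℝ => u z.2.1 z.1 * (starRingEnd ℂ) (v z.2.2 z.1)) (μ.prod (volume.prod volume)) := by
  refine (hu.gi.mul_prod (hu.hi.mul_prod hu.hi)).mono' (prod_meas hu hv).aestronglyMeasurable
    (Filter.Eventually.of_forall fun z => ?_)
  exact prod_bd hu hv _ _ _

lemma gk_int (hu : Dom μ h g u) (hv : Dom μ h g v) :
    Integrable (fun z : ℝ × ℝ => gk μ u v z.1 z.2) := by
  have := (prod_int hu hv).integral_prod_right
  exact this

lemma gk_sm (hu : Dom μ h g u) (hv : Dom μ h g v) :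
    StronglyMeasurable (fun z : ℝ × ℝ => gk μ u v z.1 z.2) := by
  have : StronglyMeasurable (fun z : X × ℝ × ℝ => u z.2.1 z.1 * (starRingEnd ℂ) (v z.2.2 z.1)) := (prod_meas hu hv).stronglyMeasurable
  exact this.integral_prod_left' 

lemma gram (hu : Dom μ h g u) (hv : Dom μ h g v) :
    ∫ ξ, (∫ s, u s ξ) * (starRingEnd ℂ) (∫ t, v t ξ) ∂μ = ∫ z : ℝ × ℝ, gk μ u v z.1 z.2 := by
  have h1 : ∀ ξ, (∫ s, u s ξ) * (starRingEnd ℂ) (∫ t, v t ξ) = ∫ z : ℝ × ℝ, u z.1 ξ * (starRingEnd ℂ) (v z.2 ξ) := by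
    intro ξ
    rw [← integral_conj, ← integral_prod_mul]; rfl
  simp_rw [h1, gk]
  exact integral_integral_swap (prod_int hu hv)

lemma gram1 (hu : Dom μ h g u) (hv : Dom μ h g v) (s : ℝ) :
    ∫ ξ, u s ξ * (starRingEnd ℂ) (∫ t, v t ξ) ∂μ = ∫ t, gk μ u v s t := by
  have h1 : ∀ ξ, u s ξ * (starRingEnd ℂ) (∫ t, v t ξ) = ∫ t, u s ξ * (starRingEnd ℂ) (v t ξ) := by
    intro ξ
    rw [← integral_conj, integral_const_mul]
  simp_rw [h1, gk]
  refine integral_integral_swap ?_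
  refine (hu.gi.mul_prod (hu.hi.const_mul (h s))).mono' ?_ (Filter.Eventually.of_forall fun z => ?_)
  · exact ((prod_meas hu hv).comp (f := fun z : X × ℝ => (z.1, s, z.2)) (by fun_prop)).aestronglyMeasurable
  · exact prod_bd hu hv _ _ _

lemma Dom.Gmeas (hu : Dom μ h g u) : StronglyMeasurable (fun ξ => ∫ s, u s ξ) :=
  hu.meas.stronglyMeasurable.integral_prod_left'

lemma Dom.Gbd (hu : Dom μ h g u) (ξ : X) : ‖∫ s, u s ξ‖ ≤ (∫ s, h s) * g ξ := by
  rw [← integral_mul_const]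
  exact norm_integral_le_of_norm_le (hu.hi.mul_const _) (Filter.Eventually.of_forall fun s => hu.bd s ξ)

lemma gram_sq (hu : Dom μ h g u) :
    ∫⁻ ξ, ‖∫ s, u s ξ‖ₑ ^ 2 ∂μ = ‖∫ z : ℝ × ℝ, gk μ u u z.1 z.2‖ₑ := by
  rw [← gram hu hu]
  have e : ∀ ξ, (∫ s, u s ξ) * (starRingEnd ℂ) (∫ s, u s ξ) = ((‖∫ s, u s ξ‖^2 : ℝ) : ℂ) := by
    intro ξ; rw [RCLike.mul_conj]; simp
  simp_rw [e]
  rw [integral_complex_ofReal]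
  have hInt : Integrable (fun ξ => ‖∫ s, u s ξ‖^2) μ := by
    refine (hu.gi.const_mul ((∫ s, h s)^2)).mono' (hu.Gmeas.norm.pow 2).aestronglyMeasurable
      (Filter.Eventually.of_forall fun ξ => ?_)
    rw [← mul_pow, norm_pow, norm_norm]
    exact pow_le_pow_left₀ (norm_nonneg _) (hu.Gbd ξ) 2
  have : ‖((∫ ξ, ‖∫ s, u s ξ‖^2 ∂μ : ℝ) : ℂ)‖ₑ = ENNReal.ofReal (∫ ξ, ‖∫ s, u s ξ‖^2 ∂μ) := by
    rw [← ofReal_norm, Complex.norm_real, Real.norm_of_nonneg (by positivity)]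
  rw [this, ofReal_integral_eq_lintegral_ofReal hInt (Filter.Eventually.of_forall fun ξ => by positivity)]
  congr 1; ext ξ
  rw [ENNReal.ofReal_pow (norm_nonneg _), ofReal_norm]

/-- Cauchy-Schwarz for the Gram pairing -/
lemma cs (f k : X → ℂ) (hf : AEMeasurable f μ) (hk : AEMeasurable k μ) :
    ‖∫ ξ, f ξ * (starRingEnd ℂ) (k ξ) ∂μ‖ₑ ≤ (∫⁻ ξ, ‖f ξ‖ₑ^2 ∂μ)^(1/2:ℝ) * (∫⁻ ξ, ‖k ξ‖ₑ^2 ∂μ)^(1/2:ℝ) := by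
  refine (enorm_integral_le_lintegral_enorm _).trans ?_
  have := ENNReal.lintegral_mul_le_Lp_mul_Lq μ (p := 2) (q := 2) (Real.holderConjugate_iff.2 ⟨by norm_num, by norm_num⟩)
    (f := fun ξ => ‖f ξ‖ₑ) (g := fun ξ => ‖k ξ‖ₑ) hf.enorm hk.enorm
  simp only [Pi.mul_apply, ENNReal.rpow_ofNat] at this
  refine le_trans (le_of_eq ?_) this
  congr 1; ext ξ
  simp only [← ofReal_norm, norm_mul, RCLike.norm_conj]
  rw [ENNReal.ofReal_mul (norm_nonneg _)]

end
end Stri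

namespace Stri
section
set_option linter.unusedSectionVars false

lemma tail_pow (p σ D R : ℝ) (hp : 2 ≤ p) (hσ : 2/p < σ) (hD : 0 ≤ D) (hR : 0 < R) :
    (∫⁻ t : ℝ, ({t : ℝ | R ≤ |t|}.indicator (fun t => ENNReal.ofReal (D * |t| ^ (-σ))) t) ^ (p/2)) ^ (2/p) ≤
      ENNReal.ofReal (D * (2 / (σ * p / 2 - 1)) ^ (2/p) * R ^ (2/p - σ)) := by
  have hp0 : 0 < p := by linarith
  have ha : 1 < σ * p / 2 := by
    rw [div_lt_iff₀ hp0] at hσ; linarith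
  have ha' : 0 < σ * p / 2 - 1 := by linarith
  have e : ∀ t : ℝ, ({t : ℝ | R ≤ |t|}.indicator (fun t => ENNReal.ofReal (D * |t| ^ (-σ))) t) ^ (p/2) =
      ENNReal.ofReal (D ^ (p/2)) * ({t : ℝ | R ≤ |t|}.indicator (fun t => ENNReal.ofReal (|t| ^ (-(σ * p / 2)))) t) := by
    intro t
    by_cases ht : R ≤ |t|
    · simp only [Set.indicator, Set.mem_ofPred_eq, ht, if_true]
      rw [ENNReal.ofReal_rpow_of_nonneg (by positivity) (by positivity), ← ENNReal.ofReal_mul (by positivity),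
        Real.mul_rpow hD (by positivity), ← Real.rpow_mul (abs_nonneg _)]
      congr 3; ring
    · simp only [Set.indicator, Set.mem_ofPred_eq, ht, if_false, mul_zero]
      exact ENNReal.zero_rpow_of_pos (by positivity)
  simp_rw [e]
  rw [lintegral_const_mul]
  · calc _ ≤ (ENNReal.ofReal (D ^ (p/2)) * ENNReal.ofReal (2 * (R ^ (1 - σ * p / 2) / (σ * p / 2 - 1)))) ^ (2/p) := by
          gcongr
          exact tail_int _ _ ha hR
      _ ≤ _ := by
          rw [← ENNReal.ofReal_mul (by positivity), ENNReal.ofReal_rpow_of_nonneg (by positivity) (by positivity)]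
          apply ENNReal.ofReal_le_ofReal
          apply le_of_eq
          rw [show 2 * (R ^ (1 - σ * p / 2) / (σ * p / 2 - 1)) = (2 / (σ * p / 2 - 1)) * R ^ (1 - σ * p / 2) by ring,
            Real.mul_rpow (by positivity) (by positivity), Real.mul_rpow (by positivity) (by positivity),
            ← Real.rpow_mul hD, ← Real.rpow_mul hR.le, mul_assoc]
          congr 2
          · rw [show p/2*(2/p) = 1 by field_simp, Real.rpow_one]
          · congr 1; field_simp
  · apply Measurable.indicator (by fun_prop)
    exact measurableSet_le measurable_const (by fun_prop)

variable {X : Type*} [MeasurableSpace X] {μ : Measure X} [SFinite μ] {h : ℝ → ℝ} {g : X → ℝ} {u v : ℝ → X → ℂ}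

lemma gk_cs (hu : Dom μ h g u) (hv : Dom μ h g v) (s t : ℝ) :
    ‖gk μ u v s t‖ₑ ≤ (∫⁻ ξ, ‖u s ξ‖ₑ^2 ∂μ)^(1/2:ℝ) * (∫⁻ ξ, ‖v t ξ‖ₑ^2 ∂μ)^(1/2:ℝ) :=
  cs _ _ (hu.meas_s s).aemeasurable (hv.meas_s t).aemeasurable

/-- far part bound -/
lemma far_bound (p p' σ D R : ℝ) (hp : 2 ≤ p) (hpp : 1/p + 1/p' = 1) (hσ : 2/p < σ) (hD : 0 ≤ D) (hR : 0 < R)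
    (c c' : ℝ → ℝ≥0∞) (hc : Measurable c) (hc' : Measurable c') (b : ℝ → ℝ → ℂ)
    (hb : ∀ s t, s ≠ t → ‖b s t‖ₑ ≤ ENNReal.ofReal (D * |s - t| ^ (-σ)) * (c s * c' t)) :
    ∫⁻ z : ℝ × ℝ, ({z : ℝ × ℝ | R ≤ |z.1 - z.2|}.indicator (fun z => ‖b z.1 z.2‖ₑ) z) ≤
      ENNReal.ofReal (D * (2 / (σ * p / 2 - 1)) ^ (2/p) * R ^ (2/p - σ)) *
        ((∫⁻ s, c s ^ p') ^ (1/p') * (∫⁻ s, c' s ^ p') ^ (1/p')) := by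
  have hk : Measurable ({t : ℝ | R ≤ |t|}.indicator (fun t => ENNReal.ofReal (D * |t| ^ (-σ)))) := by
    apply Measurable.indicator (by fun_prop)
    exact measurableSet_le measurable_const (by fun_prop)
  refine le_trans (le_trans (lintegral_mono ?_) (young p p' hp hpp c c' _ hc hc' hk)) ?_
  · intro z
    by_cases hz : R ≤ |z.1 - z.2|
    · simp only [Set.indicator, Set.mem_ofPred_eq, hz, if_true]
      apply hb
      intro h; rw [h] at hz; simp at hz; linarith
    · simp [Set.indicator, hz]
  · gcongr
    exact tail_pow p σ D R hp hσ hD hR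

lemma lemA (p p' σ C1 M : ℝ) (hp : 2 ≤ p) (hpp : 1/p + 1/p' = 1) (hσ : 2/p < σ) (hC1 : 0 ≤ C1) (hM : 0 < M)
    (hv : Dom μ h g v) (c : ℝ → ℝ≥0∞) (hc : Measurable c)
    (h2 : ∀ s, (∫⁻ ξ, ‖v s ξ‖ₑ^2 ∂μ)^(1/2:ℝ) ≤ ENNReal.ofReal (M ^ (-(1/p))) * c s)
    (hdec : ∀ s t, s ≠ t → ‖gk μ v v s t‖ₑ ≤ ENNReal.ofReal (C1 * M ^ (σ - 2/p) * |s - t| ^ (-σ)) * (c s * c t)) :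
    ∫⁻ ξ, ‖∫ s, v s ξ‖ₑ ^ 2 ∂μ ≤
      ENNReal.ofReal (2 ^ (2/p) + C1 * (2 / (σ * p / 2 - 1)) ^ (2/p)) * ((∫⁻ s, c s ^ p') ^ (1/p')) ^ 2 := by
  have hp0 : 0 < p := by linarith
  have ha : 1 < σ * p / 2 := by
    rw [div_lt_iff₀ hp0] at hσ; linarith
  have ha' : 0 < σ * p / 2 - 1 := by linarith
  rw [gram_sq hv]
  refine (enorm_integral_le_lintegral_enorm _).trans ?_
  have hfar := far_bound p p' σ (C1 * M ^ (σ - 2/p)) M hp hpp hσ (by positivity) hM c c hc hc (gk μ v v) hdec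
  set k : ℝ → ℝ≥0∞ := (Metric.ball (0:ℝ) M).indicator (fun _ => ENNReal.ofReal (M ^ (-(2/p)))) with hk
  have hkm : Measurable k := measurable_const.indicator measurableSet_ball
  have hy := young p p' hp hpp c c k hc hc hkm
  have hkint : (∫⁻ t, k t ^ (p/2)) ^ (2/p) ≤ ENNReal.ofReal (2 ^ (2/p)) := by
    have e : ∀ t, k t ^ (p/2) = (Metric.ball (0:ℝ) M).indicator (fun _ => ENNReal.ofReal (M⁻¹)) t := by
      intro t
      by_cases ht : t ∈ Metric.ball (0:ℝ) M
      · simp only [hk, Set.indicator_of_mem ht]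
        rw [ENNReal.ofReal_rpow_of_nonneg (by positivity) (by positivity), ← Real.rpow_mul hM.le,
          show -(2/p) * (p/2) = -1 by field_simp, Real.rpow_neg_one]
      · simp only [hk, Set.indicator_of_notMem ht]
        exact ENNReal.zero_rpow_of_pos (by positivity)
    simp_rw [e]
    rw [lintegral_indicator_const measurableSet_ball, Real.volume_ball, ← ENNReal.ofReal_mul (by positivity),
      ENNReal.ofReal_rpow_of_nonneg (by positivity) (by positivity)]
    apply le_of_eq; congr 2; field_simp
  have hsplit : ∀ z : ℝ × ℝ, ‖gk μ v v z.1 z.2‖ₑ ≤ k (z.1 - z.2) * (c z.1 * c z.2) +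
      {z : ℝ × ℝ | M ≤ |z.1 - z.2|}.indicator (fun z => ‖gk μ v v z.1 z.2‖ₑ) z := by
    intro z
    by_cases hz : M ≤ |z.1 - z.2|
    · simp [Set.indicator, hz]
    · have hz' : z.1 - z.2 ∈ Metric.ball (0:ℝ) M := by simpa using hz
      simp only [hk, Set.indicator_of_mem hz']
      refine le_trans ?_ le_self_add
      refine (gk_cs hv hv _ _).trans ?_
      calc _ ≤ (ENNReal.ofReal (M ^ (-(1/p))) * c z.1) * (ENNReal.ofReal (M ^ (-(1/p))) * c z.2) :=
            mul_le_mul' (h2 _) (h2 _)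
        _ = (ENNReal.ofReal (M ^ (-(1/p))) * ENNReal.ofReal (M ^ (-(1/p)))) * (c z.1 * c z.2) := by ring
        _ = _ := by
          rw [← ENNReal.ofReal_mul (by positivity), ← Real.rpow_add hM]
          congr 3; ring
  refine (lintegral_mono hsplit).trans ?_
  rw [lintegral_add_left (by fun_prop)]
  calc _ ≤ ENNReal.ofReal (2 ^ (2/p)) * ((∫⁻ s, c s ^ p') ^ (1/p') * (∫⁻ s, c s ^ p') ^ (1/p')) +
        ENNReal.ofReal (C1 * (2 / (σ * p / 2 - 1)) ^ (2/p)) * ((∫⁻ s, c s ^ p') ^ (1/p') * (∫⁻ s, c s ^ p') ^ (1/p')) := by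
        gcongr
        · exact hy.trans (by gcongr)
        · refine hfar.trans ?_
          refine mul_le_mul' (ENNReal.ofReal_le_ofReal (le_of_eq ?_)) le_rfl
          rw [show C1 * M ^ (σ - 2 / p) * (2 / (σ * p / 2 - 1)) ^ (2 / p) * M ^ (2 / p - σ) =
            C1 * (2 / (σ * p / 2 - 1)) ^ (2 / p) * (M ^ (σ - 2 / p) * M ^ (2 / p - σ)) by ring, ← Real.rpow_add hM]
          simp
    _ = _ := by
      rw [ENNReal.ofReal_add (by positivity) (by positivity)]; ring

lemma pair (p p' σ C1 M M' : ℝ) (hp : 2 ≤ p) (hpp : 1/p + 1/p' = 1) (hσ : 2/p < σ) (hC1 : 0 ≤ C1)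
    (hM' : 0 < M') (hMM : M' ≤ M)
    (hu : Dom μ h g u) (hv : Dom μ h g v) (c c' : ℝ → ℝ≥0∞) (hc : Measurable c) (hc' : Measurable c')
    (hu2 : ∀ s, (∫⁻ ξ, ‖u s ξ‖ₑ^2 ∂μ)^(1/2:ℝ) ≤ ENNReal.ofReal (M ^ (-(1/p))) * c s)
    (hv2 : ∀ s, (∫⁻ ξ, ‖v s ξ‖ₑ^2 ∂μ)^(1/2:ℝ) ≤ ENNReal.ofReal (M' ^ (-(1/p))) * c' s)
    (huv : ∀ s t, s ≠ t → ‖gk μ u v s t‖ₑ ≤ ENNReal.ofReal (C1 * (M * M') ^ ((σ - 2/p)/2) * |s - t| ^ (-σ)) * (c s * c' t))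
    (hvv : ∀ s t, s ≠ t → ‖gk μ v v s t‖ₑ ≤ ENNReal.ofReal (C1 * M' ^ (σ - 2/p) * |s - t| ^ (-σ)) * (c' s * c' t)) :
    ‖∫ ξ, (∫ s, u s ξ) * (starRingEnd ℂ) (∫ t, v t ξ) ∂μ‖ₑ ≤
      ENNReal.ofReal (((2 ^ (2/p) + C1 * (2 / (σ * p / 2 - 1)) ^ (2/p)) ^ (1/2:ℝ) * 2 ^ (1/p) +
        C1 * (2 / (σ * p / 2 - 1)) ^ (2/p)) * (M' / M) ^ (min (1/(4*p)) ((σ - 2/p)/4))) *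
        ((∫⁻ s, c s ^ p') ^ (1/p') * (∫⁻ s, c' s ^ p') ^ (1/p')) := by
  have hp0 : 0 < p := by linarith
  have hp'0 : 0 < p' := by
    have hpinv : 1/p ≤ 1/2 := one_div_le_one_div_of_le (by norm_num) hp
    have : 0 < 1/p' := by linarith
    exact one_div_pos.1 this
  have hM : 0 < M := hM'.trans_le hMM
  have ha : 1 < σ * p / 2 := by
    rw [div_lt_iff₀ hp0] at hσ; linarith
  have ha' : 0 < σ * p / 2 - 1 := by linarith
  set T := (2 / (σ * p / 2 - 1)) ^ (2/p) with hT
  have hT0 : 0 ≤ T := by positivity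
  set K0 := 2 ^ (2/p) + C1 * T with hK0
  have hK0' : 0 ≤ K0 := by positivity
  set R := M ^ (3/4:ℝ) * M' ^ (1/4:ℝ) with hR
  have hR0 : 0 < R := by positivity
  set NN := ((∫⁻ s, c s ^ p') ^ (1/p') * (∫⁻ s, c' s ^ p') ^ (1/p')) with hNN
  have hdiv : ∀ y : ℝ, (M' / M) ^ y = M' ^ y * M ^ (-y) := fun y => by
    rw [Real.div_rpow hM'.le hM.le, Real.rpow_neg hM.le, div_eq_mul_inv]
  have hRp : ∀ y : ℝ, R ^ y = M ^ (3/4 * y) * M' ^ (1/4 * y) := fun y => by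
    rw [hR, Real.mul_rpow (by positivity) (by positivity), ← Real.rpow_mul hM.le, ← Real.rpow_mul hM'.le]
  rw [gram hu hv]
  have hfar := far_bound p p' σ (C1 * (M * M') ^ ((σ - 2/p)/2)) R hp hpp hσ (by positivity) hR0 c c' hc hc' (gk μ u v) huv
  set S : Set (ℝ × ℝ) := {z : ℝ × ℝ | R ≤ |z.1 - z.2|} with hS
  have hSm : MeasurableSet S := measurableSet_le measurable_const (by fun_prop)
  have hbi := gk_int hu hv
  have hsplit : ∫ z : ℝ × ℝ, gk μ u v z.1 z.2 = (∫ z, S.indicator (fun z => gk μ u v z.1 z.2) z) +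
      ∫ z, Sᶜ.indicator (fun z => gk μ u v z.1 z.2) z := by
    rw [← integral_add (hbi.indicator hSm) (hbi.indicator hSm.compl)]
    congr 1; ext z
    by_cases hz : z ∈ S <;> simp [hz]
  -- near part
  have hnear : ‖∫ z, Sᶜ.indicator (fun z => gk μ u v z.1 z.2) z‖ₑ ≤
      ENNReal.ofReal (K0 ^ (1/2:ℝ) * 2 ^ (1/p) * (M' / M) ^ (1/(4*p))) * NN := by
    rw [Measure.volume_eq_prod, integral_prod _ (by rw [← Measure.volume_eq_prod]; exact hbi.indicator hSm.compl)]
    refine (enorm_integral_le_lintegral_enorm _).trans ?_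
    have hpt : ∀ s, ‖∫ t, Sᶜ.indicator (fun z => gk μ u v z.1 z.2) (s, t)‖ₑ ≤
        ENNReal.ofReal (M ^ (-(1/p)) * K0 ^ (1/2:ℝ)) * (c s * (∫⁻ t in Metric.ball s R, c' t ^ p') ^ (1/p')) := by
      intro s
      set I := Metric.ball s R with hI
      have hIm : MeasurableSet I := measurableSet_ball
      set v' : ℝ → X → ℂ := fun s ξ => I.indicator (fun s => v s ξ) s with hv'
      have hvd : Dom μ h g v' := hv.indicator hIm
      have e1 : ∀ t, Sᶜ.indicator (fun z => gk μ u v z.1 z.2) (s, t) = gk μ u v' s t := by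
        intro t
        by_cases ht : t ∈ I
        · have : (s, t) ∈ Sᶜ := by
            simp only [hS, Set.mem_compl_iff, Set.mem_ofPred_eq, not_le]
            rw [hI, Metric.mem_ball, Real.dist_eq, abs_sub_comm] at ht; exact ht
          simp [this, hv', ht, gk]
        · have : (s, t) ∉ Sᶜ := by
            simp only [hS, Set.mem_compl_iff, Set.mem_ofPred_eq, not_le]
            rw [hI, Metric.mem_ball, Real.dist_eq, abs_sub_comm] at ht; exact ht
          simp [this, hv', ht, gk]
      simp_rw [e1]
      rw [← gram1 hu hvd s]
      refine (cs _ _ (hu.meas_s s).aemeasurable hvd.Gmeas.measurable.aemeasurable).trans ?_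
      have hA := lemA p p' σ C1 M' hp hpp hσ hC1 hM' hvd (I.indicator c') (hc'.indicator hIm) ?_ ?_
      · have hind : ∫⁻ t, (I.indicator c' t) ^ p' = ∫⁻ t in I, c' t ^ p' := by
          rw [← lintegral_indicator hIm]
          congr 1; ext t
          by_cases ht : t ∈ I <;> simp [ht, hp'0]
        rw [hind] at hA
        calc _ ≤ (ENNReal.ofReal (M ^ (-(1/p))) * c s) * (ENNReal.ofReal K0 * ((∫⁻ t in I, c' t ^ p') ^ (1/p')) ^ 2) ^ (1/2:ℝ) := by
              gcongr; exact hu2 s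
          _ = _ := by
              rw [ENNReal.mul_rpow_of_nonneg _ _ (by norm_num), ← ENNReal.rpow_natCast, ← ENNReal.rpow_mul,
                ENNReal.ofReal_rpow_of_nonneg hK0' (by norm_num), ENNReal.ofReal_mul (by positivity)]
              norm_num
              ring
      · intro t
        by_cases ht : t ∈ I
        · simpa [hv', ht] using hv2 t
        · simp [hv', ht]
      · intro t t' htt
        by_cases ht : t ∈ I
        · by_cases ht' : t' ∈ I
          · simpa [hv', ht, ht', gk] using hvv t t' htt
          · simp [hv', ht', gk]
        · simp [hv', ht, gk]
    refine (lintegral_mono hpt).trans ?_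
    rw [lintegral_const_mul' _ _ ENNReal.ofReal_ne_top]
    refine (mul_le_mul_right (near_bound p p' hp hpp c c' hc hc' R hR0) _).trans ?_
    rw [← mul_assoc, ← ENNReal.ofReal_mul (by positivity)]
    refine mul_le_mul' (ENNReal.ofReal_le_ofReal (le_of_eq ?_)) le_rfl
    rw [Real.mul_rpow (by norm_num) hR0.le, hRp, hdiv]
    have : M ^ (-(1/(4*p))) = M ^ (-(1/p)) * M ^ (3/4 * (1/p)) := by
      rw [← Real.rpow_add hM]; congr 1; field_simp; ring
    rw [this, show 1/4 * (1/p) = 1/(4*p) by field_simp]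
    ring
  have hfar' : ‖∫ z, S.indicator (fun z => gk μ u v z.1 z.2) z‖ₑ ≤
      ENNReal.ofReal (C1 * T * (M' / M) ^ ((σ - 2/p)/4)) * NN := by
    refine (enorm_integral_le_lintegral_enorm _).trans ?_
    have : ∀ z, ‖S.indicator (fun z => gk μ u v z.1 z.2) z‖ₑ = S.indicator (fun z => ‖gk μ u v z.1 z.2‖ₑ) z := by
      intro z; by_cases hz : z ∈ S <;> simp [hz]
    simp_rw [this]
    refine hfar.trans ?_
    refine mul_le_mul' (ENNReal.ofReal_le_ofReal (le_of_eq ?_)) le_rfl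
    rw [hRp, hdiv, Real.mul_rpow hM.le hM'.le]
    have e1 : M ^ (-((σ - 2/p)/4)) = M ^ ((σ - 2/p)/2) * M ^ (3/4 * (2/p - σ)) := by
      rw [← Real.rpow_add hM]; congr 1; ring
    have e2 : M' ^ ((σ - 2/p)/4) = M' ^ ((σ - 2/p)/2) * M' ^ (1/4 * (2/p - σ)) := by
      rw [← Real.rpow_add hM']; congr 1; ring
    rw [e1, e2]; ring
  rw [hsplit]
  refine (enorm_add_le _ _).trans ((add_le_add hfar' hnear).trans ?_)
  rw [← add_mul, ← ENNReal.ofReal_add (by positivity) (by positivity)]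
  gcongr
  have hq0 : 0 < M' / M := by positivity
  have hq1 : M' / M ≤ 1 := (div_le_one hM).2 hMM
  have m1 : (M'/M) ^ (1/(4*p)) ≤ (M'/M) ^ (min (1/(4*p)) ((σ - 2/p)/4)) :=
    Real.rpow_le_rpow_of_exponent_ge hq0 hq1 (min_le_left _ _)
  have m2 : (M'/M) ^ ((σ - 2/p)/4) ≤ (M'/M) ^ (min (1/(4*p)) ((σ - 2/p)/4)) :=
    Real.rpow_le_rpow_of_exponent_ge hq0 hq1 (min_le_right _ _)
  rw [add_mul, add_comm]
  gcongr
end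
end Stri

namespace Stri
section
set_option linter.unusedSectionVars false

/-- exponent gain -/
noncomputable def eps0 (p σ : ℝ) : ℝ := min (1/(4*p)) ((σ - 2/p)/4)
/-- constant of the pair estimate -/
noncomputable def K2 (p σ C1 : ℝ) : ℝ := (2 ^ (2/p) + C1 * (2 / (σ * p / 2 - 1)) ^ (2/p)) ^ (1/2:ℝ) * 2 ^ (1/p) +
        C1 * (2 / (σ * p / 2 - 1)) ^ (2/p)
/-- geometric sum over the integers -/
noncomputable def ZZ (ρ : ℝ) : ℝ≥0∞ := ∑' k : ℤ, ENNReal.ofReal (ρ ^ k.natAbs)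
/-- constant of the summed estimate -/
noncomputable def K3 (p σ C1 β : ℝ) : ℝ≥0∞ := ENNReal.ofReal (K2 p σ C1) * (2 * ZZ (2 ^ (-(β * eps0 p σ))))

lemma ZZ_ne_top (ρ : ℝ) (h0 : 0 ≤ ρ) (h1 : ρ < 1) : ZZ ρ ≠ ∞ := by
  have hs : Summable (fun k : ℤ => ρ ^ k.natAbs) := by
    apply Summable.of_nat_of_neg
    · simpa using summable_geometric_of_lt_one h0 h1
    · simpa using summable_geometric_of_lt_one h0 h1
  unfold ZZ
  rw [← ENNReal.ofReal_tsum_of_nonneg (fun k => by positivity) hs]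
  exact ENNReal.ofReal_ne_top

lemma K3_ne_top (p σ C1 β : ℝ) (hp : 2 ≤ p) (hσ : 2/p < σ) (hβ : 0 < β) : K3 p σ C1 β ≠ ∞ := by
  unfold K3
  refine ENNReal.mul_ne_top ENNReal.ofReal_ne_top (ENNReal.mul_ne_top (by norm_num) (ZZ_ne_top _ (by positivity) ?_))
  apply Real.rpow_lt_one_of_one_lt_of_neg (by norm_num)
  have : 0 < eps0 p σ := lt_min (by positivity) (by linarith)
  have := mul_pos hβ this
  linarith

variable {X : Type*} [MeasurableSpace X] {μ : Measure X} [SFinite μ] {h : ℝ → ℝ} {g : X → ℝ}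

lemma sq_eq (G : X → ℂ) (hG : StronglyMeasurable G) (K : ℝ) (gi : Integrable (fun ξ => g ξ ^ 2) μ)
    (hb : ∀ ξ, ‖G ξ‖ ≤ K * g ξ) :
    ∫⁻ ξ, ‖G ξ‖ₑ ^ 2 ∂μ = ‖∫ ξ, G ξ * (starRingEnd ℂ) (G ξ) ∂μ‖ₑ := by
  have e : ∀ ξ, (G ξ) * (starRingEnd ℂ) (G ξ) = ((‖G ξ‖^2 : ℝ) : ℂ) := by
    intro ξ; rw [RCLike.mul_conj]; simp
  simp_rw [e]
  rw [integral_complex_ofReal]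
  have hInt : Integrable (fun ξ => ‖G ξ‖^2) μ := by
    refine (gi.const_mul (K^2)).mono' (hG.norm.pow 2).aestronglyMeasurable
      (Filter.Eventually.of_forall fun ξ => ?_)
    rw [← mul_pow, norm_pow, norm_norm]
    exact pow_le_pow_left₀ (norm_nonneg _) (hb ξ) 2
  have : ‖((∫ ξ, ‖G ξ‖^2 ∂μ : ℝ) : ℂ)‖ₑ = ENNReal.ofReal (∫ ξ, ‖G ξ‖^2 ∂μ) := by
    rw [← ofReal_norm, Complex.norm_real, Real.norm_of_nonneg (by positivity)]
  rw [this, ofReal_integral_eq_lintegral_ofReal hInt (Filter.Eventually.of_forall fun ξ => by positivity)]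
  congr 1; ext ξ
  rw [ENNReal.ofReal_pow (norm_nonneg _), ofReal_norm]

lemma summed (p p' σ C1 β : ℝ) (hp : 2 ≤ p) (hpp : 1/p + 1/p' = 1) (hσ : 2/p < σ) (hC1 : 0 ≤ C1) (hβ : 0 < β)
    (u : ℤ → ℝ → X → ℂ) (hu : ∀ m, Dom μ h g (u m)) (c : ℤ → ℝ → ℝ≥0∞) (hc : ∀ m, Measurable (c m))
    (M : ℤ → ℝ) (hM : ∀ m, M m = 2 ^ (-(β * m)))
    (h2 : ∀ m s, (∫⁻ ξ, ‖u m s ξ‖ₑ^2 ∂μ)^(1/2:ℝ) ≤ ENNReal.ofReal (M m ^ (-(1/p))) * c m s)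
    (hdec : ∀ m l s t, s ≠ t → ‖gk μ (u m) (u l) s t‖ₑ ≤
      ENNReal.ofReal (C1 * (M m * M l) ^ ((σ - 2/p)/2) * |s - t| ^ (-σ)) * (c m s * c l t))
    (S : Finset ℤ) :
    ∫⁻ ξ, ‖∑ m ∈ S, ∫ s, u m s ξ‖ₑ ^ 2 ∂μ ≤ K3 p σ C1 β * ∑ m ∈ S, ((∫⁻ s, c m s ^ p') ^ (1/p')) ^ 2 := by
  have hMpos : ∀ m, 0 < M m := fun m => by rw [hM]; positivity
  set a : ℤ → ℝ≥0∞ := fun m => (∫⁻ s, c m s ^ p') ^ (1/p') with ha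
  set G : ℤ → X → ℂ := fun m ξ => ∫ s, u m s ξ with hG
  set ρ : ℝ := 2 ^ (-(β * eps0 p σ)) with hρ
  have hK2 : 0 ≤ K2 p σ C1 := by
    have hp0 : 0 < p := by linarith
    have ha : 1 < σ * p / 2 := by
      rw [div_lt_iff₀ hp0] at hσ; linarith
    have ha' : 0 < σ * p / 2 - 1 := by linarith
    unfold K2; positivity
  have hGm : ∀ m, StronglyMeasurable (G m) := fun m => (hu m).Gmeas
  have hGb : ∀ m ξ, ‖G m ξ‖ ≤ (∫ s, h s) * g ξ := fun m ξ => (hu m).Gbd ξ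
  have hone : ∀ m l, m ≤ l → ‖∫ ξ, G m ξ * (starRingEnd ℂ) (G l ξ) ∂μ‖ₑ ≤
      ENNReal.ofReal (K2 p σ C1) * ENNReal.ofReal (ρ ^ (m - l).natAbs) * (a m * a l) := by
    intro m l hml
    have hle : M l ≤ M m := by
      rw [hM, hM]
      apply Real.rpow_le_rpow_of_exponent_le (by norm_num)
      have : (m:ℝ) ≤ l := by exact_mod_cast hml
      nlinarith
    have := pair p p' σ C1 (M m) (M l) hp hpp hσ hC1 (hMpos l) hle (hu m) (hu l) (c m) (c l) (hc m) (hc l)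
      (h2 m) (h2 l) (hdec m l) ?_
    · refine this.trans (mul_le_mul' ?_ le_rfl)
      rw [← ENNReal.ofReal_mul hK2]
      apply ENNReal.ofReal_le_ofReal
      refine mul_le_mul_of_nonneg_left (le_of_eq ?_) hK2
      rw [hM, hM, ← Real.rpow_sub (by norm_num), ← Real.rpow_mul (by norm_num), hρ, ← Real.rpow_natCast,
        ← Real.rpow_mul (by norm_num)]
      congr 1
      have : (((m - l).natAbs : ℕ) : ℝ) = l - m := by
        rw [Nat.cast_natAbs, abs_of_nonpos (by omega)]; push_cast; ring
      rw [this, eps0]; ring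
    · intro s t hst
      refine (hdec l l s t hst).trans (le_of_eq ?_)
      rw [← pow_two, ← Real.rpow_natCast, ← Real.rpow_mul (hMpos l).le]
      congr 5; push_cast; ring
  have hall : ∀ m l, ‖∫ ξ, G m ξ * (starRingEnd ℂ) (G l ξ) ∂μ‖ₑ ≤
      ENNReal.ofReal (K2 p σ C1) * ENNReal.ofReal (ρ ^ (m - l).natAbs) * (a m * a l) := by
    intro m l
    rcases le_total m l with hml | hml
    · exact hone m l hml
    · have := hone l m hml
      have e : ∫ ξ, G m ξ * (starRingEnd ℂ) (G l ξ) ∂μ = (starRingEnd ℂ) (∫ ξ, G l ξ * (starRingEnd ℂ) (G m ξ) ∂μ) := by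
        rw [← integral_conj]
        congr 1; ext ξ; simp [mul_comm]
      rw [e]
      have e2 : ∀ z : ℂ, ‖(starRingEnd ℂ) z‖ₑ = ‖z‖ₑ := fun z => by
        rw [← ofReal_norm, RCLike.norm_conj, ofReal_norm]
      rw [e2]
      refine this.trans (le_of_eq ?_)
      rw [mul_comm (a l), ← Int.natAbs_neg (l - m), neg_sub]
  have hInt : ∀ m l, Integrable (fun ξ => G m ξ * (starRingEnd ℂ) (G l ξ)) μ := by
    intro m l
    refine ((hu m).gi.const_mul ((∫ s, h s)^2)).mono' ?_ (Filter.Eventually.of_forall fun ξ => ?_)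
    · exact ((hGm m).mul (Complex.continuous_conj.comp_stronglyMeasurable (hGm l))).aestronglyMeasurable
    · rw [norm_mul, RCLike.norm_conj]
      calc _ ≤ ((∫ s, h s) * g ξ) * ((∫ s, h s) * g ξ) :=
            mul_le_mul (hGb m ξ) (hGb l ξ) (norm_nonneg _) ((norm_nonneg _).trans (hGb m ξ))
        _ = _ := by ring
  have hsq := sq_eq (μ := μ) (g := g) (fun ξ => ∑ m ∈ S, G m ξ) (by
    have := Finset.stronglyMeasurable_sum S (fun m _ => hGm m)
    convert this using 1
    ext ξ; simp) (S.card * ∫ s, h s) (hu 0).gi (by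
    intro ξ
    refine (norm_sum_le _ _).trans ?_
    calc _ ≤ ∑ m ∈ S, (∫ s, h s) * g ξ := Finset.sum_le_sum fun m _ => hGb m ξ
      _ = _ := by simp; ring)
  rw [hsq]
  have e3 : ∫ ξ, (∑ m ∈ S, G m ξ) * (starRingEnd ℂ) (∑ m ∈ S, G m ξ) ∂μ =
      ∑ m ∈ S, ∑ l ∈ S, ∫ ξ, G m ξ * (starRingEnd ℂ) (G l ξ) ∂μ := by
    rw [← Finset.sum_congr rfl fun m _ => integral_finsetSum S fun l _ => hInt m l,
      ← integral_finsetSum S fun m _ => integrable_finsetSum S fun l _ => hInt m l]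
    congr 1; ext ξ
    rw [map_sum, Finset.sum_mul_sum]
  rw [e3]
  calc ‖∑ m ∈ S, ∑ l ∈ S, ∫ ξ, G m ξ * (starRingEnd ℂ) (G l ξ) ∂μ‖ₑ
      ≤ ∑ m ∈ S, ∑ l ∈ S, ‖∫ ξ, G m ξ * (starRingEnd ℂ) (G l ξ) ∂μ‖ₑ :=
        (enorm_sum_le _ _).trans (Finset.sum_le_sum fun m _ => enorm_sum_le _ _)
    _ ≤ ∑ m ∈ S, ∑ l ∈ S, ENNReal.ofReal (K2 p σ C1) * (ENNReal.ofReal (ρ ^ (m - l).natAbs) * (a m ^ 2) + 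
          ENNReal.ofReal (ρ ^ (m - l).natAbs) * (a l ^ 2)) := by
        refine Finset.sum_le_sum fun m _ => Finset.sum_le_sum fun l _ => (hall m l).trans ?_
        rw [mul_assoc, ← mul_add]
        gcongr
        rcases le_total (a m) (a l) with h | h
        · calc a m * a l ≤ a l * a l := by gcongr
            _ = a l ^ 2 := by ring
            _ ≤ _ := le_add_self
        · calc a m * a l ≤ a m * a m := by gcongr
            _ = a m ^ 2 := by ring
            _ ≤ _ := le_self_add
    _ = ENNReal.ofReal (K2 p σ C1) * ((∑ m ∈ S, (∑ l ∈ S, ENNReal.ofReal (ρ ^ (m - l).natAbs)) * (a m ^ 2)) + 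
          ∑ l ∈ S, (∑ m ∈ S, ENNReal.ofReal (ρ ^ (m - l).natAbs)) * (a l ^ 2)) := by
        simp_rw [← Finset.mul_sum, Finset.sum_add_distrib, Finset.sum_mul]
        congr 2
        rw [Finset.sum_comm]
    _ ≤ ENNReal.ofReal (K2 p σ C1) * ((∑ m ∈ S, ZZ ρ * (a m ^ 2)) + ∑ l ∈ S, ZZ ρ * (a l ^ 2)) := by
        gcongr with m _ l _
        · calc ∑ l ∈ S, ENNReal.ofReal (ρ ^ (m - l).natAbs) ≤ ∑' l : ℤ, ENNReal.ofReal (ρ ^ (m - l).natAbs) :=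
                ENNReal.sum_le_tsum _
            _ = _ := (Equiv.subLeft m).tsum_eq (fun k : ℤ => ENNReal.ofReal (ρ ^ k.natAbs))
        · calc ∑ m ∈ S, ENNReal.ofReal (ρ ^ (m - l).natAbs) ≤ ∑' m : ℤ, ENNReal.ofReal (ρ ^ (m - l).natAbs) :=
                ENNReal.sum_le_tsum _
            _ = _ := (Equiv.subRight l).tsum_eq (fun k : ℤ => ENNReal.ofReal (ρ ^ k.natAbs))
    _ = _ := by
        rw [← Finset.mul_sum, K3]; ring
end
end Stri

namespace Stri
open scoped ContDiff
lemma plancherel {d : ℕ} (f : EuclideanSpace ℝ (Fin d) → ℂ) (h1 : Integrable f) (h2 : MemLp f 2) :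
    eLpNorm (𝓕 f) 2 = eLpNorm f 2 := by
  set φ : Lp (α := EuclideanSpace ℝ (Fin d)) ℂ 2 volume := h2.toLp f with hφ
  set G : Lp (α := EuclideanSpace ℝ (Fin d)) ℂ 2 volume := 𝓕 φ with hG
  have hcont : Continuous (𝓕 f) :=
    VectorFourier.fourierIntegral_continuous Real.continuous_fourierChar (by exact continuous_inner) h1
  have hae : (𝓕 f) =ᵐ[volume] G := by
    apply ae_eq_of_integral_contDiff_smul_eq hcont.locallyIntegrable ((Lp.memLp G).locallyIntegrable (by norm_num))
    intro g g_smooth g_cpt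
    have hg₁ : HasCompactSupport (Complex.ofRealCLM ∘ g) := g_cpt.comp_left rfl
    have hg₂ : ContDiff ℝ ∞ (Complex.ofRealCLM ∘ g) := by fun_prop
    set ψ := hg₁.toSchwartzMap hg₂ with hψ
    have e1 : ∫ x, g x • G x = ∫ x, (𝓕 ψ) x • φ x := by
      calc _ = ∫ x, ψ x • G x := by simp [hψ]
        _ = (Lp.toTemperedDistribution G) ψ := (Lp.toTemperedDistribution_apply G ψ).symm
        _ = (𝓕 (Lp.toTemperedDistribution φ)) ψ := by rw [Lp.fourier_toTemperedDistribution_eq]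
        _ = (Lp.toTemperedDistribution φ) (𝓕 ψ) := by simp
        _ = _ := Lp.toTemperedDistribution_apply φ _
    have e2 : ∫ x, (𝓕 ψ) x • φ x = ∫ x, (𝓕 ψ) x • f x := by
      apply integral_congr_ae
      filter_upwards [h2.coeFn_toLp] with x hx
      rw [hφ, hx]
    have e3 := VectorFourier.integral_fourierIntegral_smul_eq_flip (L := innerₗ (EuclideanSpace ℝ (Fin d))) (μ := volume) (ν := volume) (f := (ψ : EuclideanSpace ℝ (Fin d) → ℂ)) (g := f)
      Real.continuous_fourierChar continuous_inner ψ.integrable h1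
    rw [flip_innerₗ] at e3
    rw [e1, e2]
    calc _ = ∫ x, ψ x • 𝓕 f x := by simp [hψ]
      _ = _ := e3.symm
      _ = _ := by
        rw [SchwartzMap.fourier_coe]; rfl
  rw [eLpNorm_congr_ae hae, ← eLpNorm_congr_ae h2.coeFn_toLp, ← Lp.enorm_def, ← Lp.enorm_def,
    ← ofReal_norm, ← ofReal_norm, hG, Lp.norm_fourier_eq]

lemma plancherel_inv {d : ℕ} (f : EuclideanSpace ℝ (Fin d) → ℂ) (h1 : Integrable f) (h2 : MemLp f 2) :
    eLpNorm (𝓕⁻ f) 2 = eLpNorm f 2 := by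
  rw [← plancherel f h1 h2]
  have : (𝓕⁻ f : EuclideanSpace ℝ (Fin d) → ℂ) = (𝓕 f) ∘ Neg.neg := by
    ext x; simp [Real.fourierInv_eq_fourier_neg]
  rw [this]
  refine eLpNorm_comp_measurePreserving ?_ (Measure.measurePreserving_neg _)
  have hcont : Continuous (𝓕 f) :=
    VectorFourier.fourierIntegral_continuous Real.continuous_fourierChar (by exact continuous_inner) h1
  exact hcont.aestronglyMeasurable
end Stri

namespace Stri

lemma integrable_wt {d : ℕ} (ε : ℝ) (hε : 0 < ε) :
    Integrable (fun ξ : EuclideanSpace ℝ (Fin d) => Real.exp (-ε * (2 * π * ‖ξ‖) ^ 4)) := by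
  have := integrable_exp_quartic (d := d) (ε * (2*π)^4) 0 (by positivity) le_rfl
  refine this.congr (Filter.Eventually.of_forall fun ξ => ?_)
  simp only
  congr 1; ring

lemma ker_bd (d : ℕ) : ∃ C : ℝ, 0 ≤ C ∧ ∀ ε τ : ℝ, 0 < ε → τ ≠ 0 → ∀ a b : EuclideanSpace ℝ (Fin d) → ℂ,
    Integrable a → Integrable b →
    ‖∫ ξ, cexp (-((ε:ℂ) + τ * I) * ((2 * Real.pi * ‖ξ‖ : ℝ) : ℂ) ^ 4) * (𝓕 a ξ * (starRingEnd ℂ) (𝓕 b ξ))‖ₑ ≤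
      ENNReal.ofReal (C * |τ| ^ (-((d:ℝ)/4))) * ((∫⁻ x, ‖a x‖ₑ) * ∫⁻ x, ‖b x‖ₑ) := by
  obtain ⟨C, hC, hd⟩ := disp d
  refine ⟨C * ((2 * π) ^ 4) ^ (-((d:ℝ)/4)), by positivity, ?_⟩
  intro ε τ hε hτ a b ha hb
  set W : EuclideanSpace ℝ (Fin d) → ℂ := fun ξ => cexp (-((ε:ℂ) + τ * I) * ((2 * Real.pi * ‖ξ‖ : ℝ) : ℂ) ^ 4) with hW
  have h4 : (0:ℝ) < (2*π)^4 := by positivity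
  have hWi : Integrable W := by
    refine (integrable_wt ε hε).mono' (by fun_prop) (Filter.Eventually.of_forall fun ξ => le_of_eq ?_)
    simp only [hW, Complex.norm_exp]
    congr 1
    rw [← Complex.ofReal_pow, Complex.re_mul_ofReal]
    simp
  set e : EuclideanSpace ℝ (Fin d) → EuclideanSpace ℝ (Fin d) × EuclideanSpace ℝ (Fin d) → ℂ :=
    fun ξ z => cexp (I * ⟪-(2*π) • (z.1 - z.2), ξ⟫) with he
  have hF : ∀ ξ, 𝓕 a ξ * (starRingEnd ℂ) (𝓕 b ξ) = ∫ z : EuclideanSpace ℝ (Fin d) × EuclideanSpace ℝ (Fin d),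
      e ξ z * (a z.1 * (starRingEnd ℂ) (b z.2)) := by
    intro ξ
    rw [Real.fourier_eq' , Real.fourier_eq', ← integral_conj, ← integral_prod_mul]
    congr 1; ext z
    simp only [he, smul_eq_mul, map_mul, ← Complex.exp_conj, Complex.conj_I, Complex.conj_ofReal]
    rw [mul_mul_mul_comm, ← Complex.exp_add]
    congr 2
    rw [inner_smul_left, inner_sub_left]
    simp
    ring
  have hsw : ∫ ξ, W ξ * (𝓕 a ξ * (starRingEnd ℂ) (𝓕 b ξ)) =
      ∫ z : EuclideanSpace ℝ (Fin d) × EuclideanSpace ℝ (Fin d), (∫ ξ, W ξ * e ξ z) * (a z.1 * (starRingEnd ℂ) (b z.2)) := by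
    simp_rw [hF, ← integral_const_mul, ← integral_mul_const]
    rw [integral_integral_swap]
    · congr 1; ext z; congr 1; ext ξ; ring
    · refine (hWi.mul_prod (ha.mul_prod (g := fun y => (starRingEnd ℂ) (b y)) ?_)).mono ?_ ?_
      · exact hb.congr' (Complex.continuous_conj.comp_aestronglyMeasurable hb.1)
          (Filter.Eventually.of_forall fun y => (RCLike.norm_conj _).symm)
      · have hm : AEStronglyMeasurable (fun z : EuclideanSpace ℝ (Fin d) × EuclideanSpace ℝ (Fin d) × EuclideanSpace ℝ (Fin d) =>
            (a z.2.1 * (starRingEnd ℂ) (b z.2.2))) (volume.prod volume) := by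
          have := (ha.1.comp_fst (ν := (volume : Measure (EuclideanSpace ℝ (Fin d))))).mul
            (Complex.continuous_conj.comp_aestronglyMeasurable (hb.1.comp_snd (μ := (volume : Measure (EuclideanSpace ℝ (Fin d))))))
          exact this.comp_snd
        have hc1 : Continuous (fun z : EuclideanSpace ℝ (Fin d) × EuclideanSpace ℝ (Fin d) × EuclideanSpace ℝ (Fin d) =>
            W z.1) := by fun_prop
        have hc2 : Continuous (fun z : EuclideanSpace ℝ (Fin d) × EuclideanSpace ℝ (Fin d) × EuclideanSpace ℝ (Fin d) =>
            e z.1 z.2) := by fun_prop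
        exact hc1.aestronglyMeasurable.mul (hc2.aestronglyMeasurable.mul hm)
      · refine Filter.Eventually.of_forall fun z => le_of_eq ?_
        have : ‖e z.1 z.2‖ = 1 := by
          simp only [he]
          rw [mul_comm, Complex.norm_exp_ofReal_mul_I]
        simp only [Function.uncurry]
        simp only [norm_mul, this, one_mul]
  rw [hsw]
  refine (enorm_integral_le_lintegral_enorm _).trans ?_
  calc _ ≤ ∫⁻ z : EuclideanSpace ℝ (Fin d) × EuclideanSpace ℝ (Fin d), 
      ENNReal.ofReal (C * ((2 * π) ^ 4) ^ (-((d:ℝ)/4)) * |τ| ^ (-((d:ℝ)/4))) * (‖a z.1‖ₑ * ‖b z.2‖ₑ) := by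
        refine lintegral_mono fun z => ?_
        rw [enorm_mul, enorm_mul]
        have : ‖(starRingEnd ℂ) (b z.2)‖ₑ = ‖b z.2‖ₑ := by rw [← ofReal_norm, RCLike.norm_conj, ofReal_norm]
        rw [this]
        gcongr
        rw [← ofReal_norm]
        apply ENNReal.ofReal_le_ofReal
        have := hd (ε * (2*π)^4) (τ * (2*π)^4) (by positivity) (by positivity) (-(2*π) • (z.1 - z.2))
        rw [abs_mul, abs_of_pos h4, Real.mul_rpow (abs_nonneg _) h4.le] at this
        refine le_trans (le_of_eq ?_) (this.trans (le_of_eq (by ring)))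
        congr 2; ext ξ
        simp only [hW, he]
        rw [← Complex.exp_add]
        congr 1
        push_cast; ring
    _ = _ := by
        rw [lintegral_const_mul' _ _ ENNReal.ofReal_ne_top]
        congr 1
        exact lintegral_prod_mul ha.1.aemeasurable.enorm hb.1.aemeasurable.enorm
end Stri

namespace Stri

/-- dyadic layer of a function -/
noncomputable def layer {X : Type*} (N : ℝ) (φ : X → ℂ) (m : ℤ) (x : X) : ℂ :=
  if 2 ^ m * N < ‖φ x‖ ∧ ‖φ x‖ ≤ 2 ^ (m+1) * N then φ x else 0

lemma layer_norm_le {X : Type*} (N : ℝ) (φ : X → ℂ) (m : ℤ) (x : X) : ‖layer N φ m x‖ ≤ ‖φ x‖ := by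
  unfold layer; split_ifs <;> simp

lemma layer_disj {X : Type*} (N : ℝ) (hN : 0 ≤ N) (φ : X → ℂ) (m l : ℤ) (x : X) (h : m ≠ l) 
    (hm : layer N φ m x ≠ 0) : layer N φ l x = 0 := by
  unfold layer at hm ⊢
  rw [ite_ne_right_iff] at hm
  rw [if_neg]
  rintro ⟨h1, h2⟩
  obtain ⟨⟨h3, h4⟩, -⟩ := hm
  have key : ∀ a b : ℤ, a < b → (2:ℝ)^(a+1) * N ≤ 2 ^ b * N := fun a b hab =>
    mul_le_mul_of_nonneg_right (zpow_le_zpow_right₀ (by norm_num) (by omega)) hN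
  rcases lt_or_gt_of_ne h with h | h
  · linarith [key m l h]
  · linarith [key l m h]

lemma layer_zero {X : Type*} (φ : X → ℂ) (m : ℤ) (x : X) : layer 0 φ m x = 0 := by
  unfold layer
  rw [if_neg]
  rintro ⟨h1, h2⟩
  simp at h1 h2
  exact h1 h2

lemma layer_sum {X : Type*} (N : ℝ) (hN : 0 ≤ N) (φ : X → ℂ) (S : Finset ℤ) (x : X) :
    (∑ m ∈ S, layer N φ m x = 0 ∧ ∀ m ∈ S, layer N φ m x = 0) ∨
      ∃ m ∈ S, layer N φ m x = φ x ∧ ∑ m ∈ S, layer N φ m x = φ x ∧ ∀ l ≠ m, layer N φ l x = 0 := by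
  by_cases h : ∀ m ∈ S, layer N φ m x = 0
  · left; exact ⟨Finset.sum_eq_zero h, h⟩
  · right
    push Not at h
    obtain ⟨m, hmS, hm⟩ := h
    have h1 : ∀ l ≠ m, layer N φ l x = 0 := fun l hl => layer_disj N hN φ m l x hl.symm hm
    have h2 : layer N φ m x = φ x := by
      unfold layer at hm ⊢
      rw [ite_ne_right_iff] at hm
      rw [if_pos hm.1]
    refine ⟨m, hmS, h2, ?_, h1⟩
    rw [Finset.sum_eq_single m (fun l _ hl => h1 l hl) (fun h => absurd hmS h), h2]

lemma layer_sum_norm_le {X : Type*} (N : ℝ) (hN : 0 ≤ N) (φ : X → ℂ) (S : Finset ℤ) (x : X) :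
    ‖∑ m ∈ S, layer N φ m x‖ ≤ ‖φ x‖ := by
  rcases layer_sum N hN φ S x with h | ⟨m, _, _, h, _⟩
  · rw [h.1]; simp
  · rw [h]

lemma layer_sum_eventually {X : Type*} (N : ℝ) (hN : 0 < N) (φ : X → ℂ) (x : X) :
    ∀ᶠ n : ℕ in Filter.atTop, ∑ m ∈ Finset.Icc (-(n:ℤ)) n, layer N φ m x = φ x := by
  by_cases hx : φ x = 0
  · refine Filter.Eventually.of_forall fun n => ?_
    have := layer_sum_norm_le N hN.le φ (Finset.Icc (-(n:ℤ)) n) x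
    rw [hx, norm_zero] at this
    rw [hx]; exact norm_le_zero_iff.1 this
  · have hy : 0 < ‖φ x‖ / N := div_pos (norm_pos_iff.2 hx) hN
    obtain ⟨m, h1, h2⟩ := exists_mem_Ioc_zpow hy (by norm_num : (1:ℝ) < 2)
    rw [lt_div_iff₀ hN] at h1
    rw [div_le_iff₀ hN] at h2
    have hm : layer N φ m x = φ x := by unfold layer; rw [if_pos ⟨h1, h2⟩]
    filter_upwards [Filter.eventually_ge_atTop m.natAbs] with n hn
    rcases layer_sum N hN.le φ (Finset.Icc (-(n:ℤ)) n) x with h | ⟨_, _, _, h, _⟩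
    · exfalso
      apply hx
      rw [← hm]
      exact h.2 m (by rw [Finset.mem_Icc]; omega)
    · exact h

lemma layer_meas {X : Type*} [MeasurableSpace X] {N : X → ℝ} (hN : Measurable N) {φ : X → ℂ} (hφ : Measurable φ) (m : ℤ) :
    Measurable (fun x => layer (N x) φ m x) := by
  unfold layer
  refine Measurable.ite ?_ hφ measurable_const
  exact (measurableSet_lt (hN.const_mul _) hφ.norm).inter (measurableSet_le hφ.norm (hN.const_mul _))

variable {X : Type*} [MeasurableSpace X] {μ : Measure X}

/-- normalized mass of a layer -/
noncomputable def em (μ : Measure X) (q N : ℝ) (φ : X → ℂ) (m : ℤ) : ℝ≥0∞ :=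
  (∫⁻ x, ‖layer N φ m x‖ₑ ^ q ∂μ) / ∫⁻ x, ‖φ x‖ₑ ^ q ∂μ

lemma em_sum (q N : ℝ) (hq : 0 < q) (hN : 0 ≤ N) (φ : X → ℂ) (hφ : Measurable φ) (S : Finset ℤ) :
    ∑ m ∈ S, em μ q N φ m ≤ 1 := by
  unfold em
  simp_rw [div_eq_mul_inv]
  rw [← Finset.sum_mul, ← div_eq_mul_inv]
  refine ENNReal.div_le_of_le_mul ?_
  rw [one_mul, ← lintegral_finsetSum]
  · refine lintegral_mono fun x => ?_
    rcases layer_sum N hN φ S x with h | ⟨m, hmS, h1, h2, h3⟩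
    · rw [Finset.sum_eq_zero fun m hm => by rw [h.2 m hm]; simp [hq]]
      exact bot_le
    · rw [Finset.sum_eq_single m (fun l _ hl => by rw [h3 l hl]; simp [hq]) (fun h => absurd hmS h), h1]
  · intro m _
    exact (layer_meas (N := fun _ => N) measurable_const hφ m).enorm.pow_const _

lemma em_le_one (q N : ℝ) (hq : 0 < q) (hN : 0 ≤ N) (φ : X → ℂ) (hφ : Measurable φ) (m : ℤ) : em μ q N φ m ≤ 1 := by
  simpa using em_sum (μ := μ) q N hq hN φ hφ {m}

lemma layer_L1 (q N : ℝ) (hq1 : 1 ≤ q) (hN : 0 ≤ N) (φ : X → ℂ) (hφ : Measurable φ)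
    (hNq : ∫⁻ x, ‖φ x‖ₑ ^ q ∂μ = ENNReal.ofReal N ^ q) (m : ℤ) :
    ∫⁻ x, ‖layer N φ m x‖ₑ ∂μ ≤ ENNReal.ofReal (2 ^ ((m:ℝ) * (1 - q))) * (2 * ENNReal.ofReal N * em μ q N φ m ^ (1/2:ℝ)) := by
  rcases hN.eq_or_lt with h0 | hN0
  · simp [← h0, layer_zero]
  have hq0 : 0 < q := by linarith
  have hpt : ∀ x, ‖layer N φ m x‖ₑ ≤ ENNReal.ofReal ((2 ^ m * N) ^ (1 - q)) * ‖layer N φ m x‖ₑ ^ q := by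
    intro x
    unfold layer
    split_ifs with h
    · have hpos : 0 < 2 ^ m * N := by positivity
      have hy : 0 < ‖φ x‖ := hpos.trans h.1
      rw [← ofReal_norm, ENNReal.ofReal_rpow_of_nonneg (norm_nonneg _) hq0.le, ← ENNReal.ofReal_mul (by positivity)]
      apply ENNReal.ofReal_le_ofReal
      calc ‖φ x‖ = ‖φ x‖ ^ (1 - q) * ‖φ x‖ ^ q := by
            rw [← Real.rpow_add hy]; simp
        _ ≤ _ := by
          gcongr ?_ * _
          exact Real.rpow_le_rpow_of_nonpos hpos h.1.le (by linarith)
    · simp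
  refine (lintegral_mono hpt).trans ?_
  rw [lintegral_const_mul' _ _ ENNReal.ofReal_ne_top]
  have hQ0 : ENNReal.ofReal N ^ q ≠ 0 := by simp [hN0]
  have hQt : ENNReal.ofReal N ^ q ≠ ∞ := ENNReal.rpow_ne_top_of_nonneg hq0.le ENNReal.ofReal_ne_top
  have he : ∫⁻ x, ‖layer N φ m x‖ₑ ^ q ∂μ = em μ q N φ m * ENNReal.ofReal N ^ q := by
    rw [em, hNq, ENNReal.div_mul_cancel hQ0 hQt]
  rw [he, Real.mul_rpow (by positivity) hN0.le, ← Real.rpow_intCast, ← Real.rpow_mul (by norm_num),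
    ENNReal.ofReal_mul (by positivity), mul_assoc]
  refine mul_le_mul' le_rfl ?_
  rw [ENNReal.ofReal_rpow_of_pos hN0, mul_left_comm, ← ENNReal.ofReal_mul (by positivity), ← Real.rpow_add hN0]
  have he1 := em_le_one (μ := μ) q N hq0 hN φ hφ m
  rw [show 1 - q + q = 1 by ring, Real.rpow_one, mul_comm]
  have : em μ q N φ m ≤ em μ q N φ m ^ (1/2:ℝ) := by
    conv_lhs => rw [← ENNReal.rpow_one (em μ q N φ m)]
    exact ENNReal.rpow_le_rpow_of_exponent_ge he1 (by norm_num)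
  gcongr
  calc ENNReal.ofReal N = 1 * ENNReal.ofReal N := (one_mul _).symm
    _ ≤ 2 * ENNReal.ofReal N := by gcongr; norm_num

lemma layer_L2 (q N : ℝ) (hq1 : 1 ≤ q) (hq2 : q ≤ 2) (hN : 0 ≤ N) (φ : X → ℂ)
    (hNq : ∫⁻ x, ‖φ x‖ₑ ^ q ∂μ = ENNReal.ofReal N ^ q) (m : ℤ) :
    (∫⁻ x, ‖layer N φ m x‖ₑ ^ 2 ∂μ) ^ (1/2:ℝ) ≤
      ENNReal.ofReal (2 ^ ((m:ℝ) * (1 - q/2))) * (2 * ENNReal.ofReal N * em μ q N φ m ^ (1/2:ℝ)) := by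
  rcases hN.eq_or_lt with h0 | hN0
  · simp [← h0, layer_zero]
  have hq0 : 0 < q := by linarith
  have hpt : ∀ x, ‖layer N φ m x‖ₑ ^ 2 ≤ ENNReal.ofReal ((2 ^ (m + 1) * N) ^ (2 - q)) * ‖layer N φ m x‖ₑ ^ q := by
    intro x
    unfold layer
    split_ifs with h
    · have hpos : 0 < 2 ^ m * N := by positivity
      have hy : 0 < ‖φ x‖ := hpos.trans h.1
      rw [← ofReal_norm, ENNReal.ofReal_rpow_of_nonneg (norm_nonneg _) hq0.le, ← ENNReal.ofReal_mul (by positivity),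
        ← ENNReal.ofReal_pow (norm_nonneg _)]
      apply ENNReal.ofReal_le_ofReal
      calc ‖φ x‖ ^ 2 = ‖φ x‖ ^ (2 - q) * ‖φ x‖ ^ q := by
            rw [← Real.rpow_add hy]; simp
        _ ≤ _ := by
          gcongr ?_ * _
          exact Real.rpow_le_rpow hy.le h.2 (by linarith)
    · simp
  have hQ0 : ENNReal.ofReal N ^ q ≠ 0 := by simp [hN0]
  have hQt : ENNReal.ofReal N ^ q ≠ ∞ := ENNReal.rpow_ne_top_of_nonneg hq0.le ENNReal.ofReal_ne_top
  have he : ∫⁻ x, ‖layer N φ m x‖ₑ ^ q ∂μ = em μ q N φ m * ENNReal.ofReal N ^ q := by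
    rw [em, hNq, ENNReal.div_mul_cancel hQ0 hQt]
  calc (∫⁻ x, ‖layer N φ m x‖ₑ ^ 2 ∂μ) ^ (1/2:ℝ) 
      ≤ (ENNReal.ofReal ((2 ^ (m + 1) * N) ^ (2 - q)) * (em μ q N φ m * ENNReal.ofReal N ^ q)) ^ (1/2:ℝ) := by
        rw [← he, ← lintegral_const_mul' _ _ ENNReal.ofReal_ne_top]
        gcongr with x
        exact hpt x
    _ = ENNReal.ofReal (2 ^ (((m + 1 : ℤ):ℝ) * (1 - q/2))) * (ENNReal.ofReal N * em μ q N φ m ^ (1/2:ℝ)) := by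
        rw [ENNReal.ofReal_rpow_of_pos hN0, mul_left_comm, ← ENNReal.ofReal_mul (by positivity),
          ENNReal.mul_rpow_of_nonneg _ _ (by norm_num), ENNReal.ofReal_rpow_of_nonneg (by positivity) (by norm_num),
          Real.mul_rpow (by positivity) hN0.le, mul_assoc, ← Real.rpow_add hN0,
          Real.mul_rpow (by positivity) (by positivity), ← Real.rpow_intCast, ← Real.rpow_mul (by positivity),
          ← Real.rpow_mul (by norm_num), ← Real.rpow_mul hN0.le, show (2 - q + q) * (1/2) = 1 by ring, Real.rpow_one,
          ENNReal.ofReal_mul (by positivity), show ((m + 1 : ℤ):ℝ) * ((2 - q) * (1/2)) = ((m + 1 : ℤ):ℝ) * (1 - q/2) by ring]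
        ring
    _ ≤ _ := by
        rw [mul_assoc 2, ← mul_assoc _ 2]
        gcongr
        rw [show (2:ℝ≥0∞) = ENNReal.ofReal 2 by simp, ← ENNReal.ofReal_mul (by positivity)]
        apply ENNReal.ofReal_le_ofReal
        push_cast
        rw [add_mul, Real.rpow_add (by norm_num), one_mul]
        gcongr
        calc (2:ℝ) ^ (1 - q/2) ≤ 2 ^ (1:ℝ) := Real.rpow_le_rpow_of_exponent_le (by norm_num) (by linarith)
          _ = 2 := by simp
end Stri

namespace Stri
section
set_option linter.unusedSectionVars false

variable {d : ℕ}

/-- phase -/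
noncomputable def phs (ξ : EuclideanSpace ℝ (Fin d)) : ℂ := ((2 * Real.pi * ‖ξ‖ : ℝ) : ℂ) ^ 4

/-- regularized evolution on the Fourier side -/
noncomputable def uu (ε : ℝ) (f : ℝ → EuclideanSpace ℝ (Fin d) → ℂ) (s : ℝ) (ξ : EuclideanSpace ℝ (Fin d)) : ℂ :=
  cexp (-((ε/2 : ℝ) : ℂ) * phs ξ) * (cexp (I * ((-s : ℝ) : ℂ) * phs ξ) * 𝓕 (f s) ξ)

/-- nice space-time functions -/
structure Good (F : ℝ → EuclideanSpace ℝ (Fin d) → ℂ) : Prop where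
  meas : Measurable (Function.uncurry F)
  int : Integrable (Function.uncurry F)
  int1 : ∀ s, Integrable (F s)
  int2 : ∀ s, MemLp (F s) 2

lemma Good.mono {F f : ℝ → EuclideanSpace ℝ (Fin d) → ℂ} (hF : Good F) (hm : Measurable (Function.uncurry f))
    (hb : ∀ s x, ‖f s x‖ ≤ ‖F s x‖) : Good f where
  meas := hm
  int := hF.int.mono hm.aestronglyMeasurable (Filter.Eventually.of_forall fun z => hb z.1 z.2)
  int1 := fun s => (hF.int1 s).mono (hm.of_uncurry_left).aestronglyMeasurable (Filter.Eventually.of_forall fun x => hb s x)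
  int2 := fun s => (hF.int2 s).mono (hm.of_uncurry_left).aestronglyMeasurable (Filter.Eventually.of_forall fun x => hb s x)

lemma fourier_norm_le (f : EuclideanSpace ℝ (Fin d) → ℂ) (ξ : EuclideanSpace ℝ (Fin d)) :
    ‖𝓕 f ξ‖ ≤ ∫ x, ‖f x‖ := by
  rw [Real.fourier_eq]
  refine (norm_integral_le_integral_norm _).trans (le_of_eq ?_)
  simp

lemma fourier_meas {F : ℝ → EuclideanSpace ℝ (Fin d) → ℂ} (hF : Measurable (Function.uncurry F)) :
    Measurable (Function.uncurry fun s ξ => 𝓕 (F s) ξ) := by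
  have h1 : Measurable (fun z : (ℝ × EuclideanSpace ℝ (Fin d)) × EuclideanSpace ℝ (Fin d) =>
      cexp (↑(-2 * π * ⟪z.2, z.1.2⟫) * I) • F z.1.1 z.2) := by
    have h2 : Measurable (fun z : (ℝ × EuclideanSpace ℝ (Fin d)) × EuclideanSpace ℝ (Fin d) => F z.1.1 z.2) :=
      hF.comp (f := fun z : (ℝ × EuclideanSpace ℝ (Fin d)) × EuclideanSpace ℝ (Fin d) => (z.1.1, z.2)) (by fun_prop)
    have h3 : Continuous (fun z : (ℝ × EuclideanSpace ℝ (Fin d)) × EuclideanSpace ℝ (Fin d) =>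
      cexp (↑(-2 * π * ⟪z.2, z.1.2⟫) * I)) := by fun_prop
    exact h3.measurable.smul h2
  have := h1.stronglyMeasurable.integral_prod_right' (ν := volume)
  have e : (Function.uncurry fun s ξ => 𝓕 (F s) ξ) = fun x : ℝ × EuclideanSpace ℝ (Fin d) =>
      ∫ y, cexp (↑(-2 * π * ⟪y, x.2⟫) * I) • F x.1 y := by
    ext z
    simp only [Function.uncurry, Real.fourier_eq']
  rw [e]
  exact this.measurable

lemma norm_wt (ε : ℝ) (ξ : EuclideanSpace ℝ (Fin d)) :
    ‖cexp (-((ε/2 : ℝ) : ℂ) * phs ξ)‖ = rexp (-(ε/2) * (2 * π * ‖ξ‖)^4) := by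
  rw [Complex.norm_exp, phs, ← Complex.ofReal_pow, ← Complex.ofReal_neg, ← Complex.ofReal_mul, Complex.ofReal_re]

lemma norm_osc (s : ℝ) (ξ : EuclideanSpace ℝ (Fin d)) :
    ‖cexp (I * ((-s : ℝ) : ℂ) * phs ξ)‖ = 1 := by
  rw [phs, ← Complex.ofReal_pow, mul_assoc, ← Complex.ofReal_mul, mul_comm, Complex.norm_exp_ofReal_mul_I]

lemma phs_cont : Continuous (phs : EuclideanSpace ℝ (Fin d) → ℂ) := by
  unfold phs; fun_prop

lemma uu_meas (ε : ℝ) {F : ℝ → EuclideanSpace ℝ (Fin d) → ℂ} (hF : Measurable (Function.uncurry F)) :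
    Measurable (Function.uncurry (uu ε F)) := by
  have h1 := fourier_meas hF
  have h2 : Measurable (fun z : ℝ × EuclideanSpace ℝ (Fin d) => phs z.2) := phs_cont.measurable.comp measurable_snd
  unfold uu
  simp only [Function.uncurry_def] at h1 ⊢
  fun_prop

lemma uu_norm (ε : ℝ) (F : ℝ → EuclideanSpace ℝ (Fin d) → ℂ) (s : ℝ) (ξ : EuclideanSpace ℝ (Fin d)) :
    ‖uu ε F s ξ‖ = rexp (-(ε/2) * (2 * π * ‖ξ‖)^4) * ‖𝓕 (F s) ξ‖ := by
  rw [uu, norm_mul, norm_mul, norm_wt, norm_osc, one_mul]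

lemma uu_dom (ε : ℝ) (hε : 0 < ε) {F f : ℝ → EuclideanSpace ℝ (Fin d) → ℂ} (hF : Good F) (hf : Good f)
    (hb : ∀ s x, ‖f s x‖ ≤ ‖F s x‖) :
    Dom volume (fun s => ∫ x, ‖F s x‖) (fun ξ => rexp (-(ε/2) * (2 * π * ‖ξ‖)^4)) (uu ε f) where
  meas := uu_meas ε hf.meas
  hi := hF.int.norm.integral_prod_left
  gi := by
    refine (integrable_wt ε hε).congr (Filter.Eventually.of_forall fun ξ => ?_)
    simp only
    rw [← Real.exp_nat_mul]
    congr 1; push_cast; ring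
  h0 := fun s => integral_nonneg fun x => norm_nonneg _
  bd := fun s ξ => by
    rw [uu_norm, mul_comm]
    refine mul_le_mul_of_nonneg_right ((fourier_norm_le _ _).trans ?_) (Real.exp_nonneg _)
    exact integral_mono (hf.int1 s).norm (hF.int1 s).norm (fun x => hb s x)

lemma lint_sq {X : Type*} [MeasurableSpace X] {μ : Measure X} (f : X → ℂ) : ∫⁻ x, ‖f x‖ₑ^2 ∂μ = eLpNorm f 2 μ ^ 2 := by
  rw [eLpNorm_eq_lintegral_rpow_enorm_toReal (by norm_num) (by norm_num), ← ENNReal.rpow_natCast, ← ENNReal.rpow_mul]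
  simp

lemma uu_L2 (ε : ℝ) (hε : 0 < ε) {f : ℝ → EuclideanSpace ℝ (Fin d) → ℂ} (hf : Good f) (s : ℝ) :
    ∫⁻ ξ, ‖uu ε f s ξ‖ₑ^2 ≤ ∫⁻ x, ‖f s x‖ₑ^2 := by
  rw [lint_sq (f s), ← plancherel (f s) (hf.int1 s) (hf.int2 s), ← lint_sq]
  refine lintegral_mono fun ξ => ?_
  gcongr
  rw [enorm_le_iff_norm_le, uu_norm]
  refine mul_le_of_le_one_left (norm_nonneg _) (Real.exp_le_one_iff.2 ?_)
  have : 0 ≤ ε/2 * (2 * π * ‖ξ‖)^4 := by positivity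
  linarith

lemma uu_gk (ε : ℝ) (f k : ℝ → EuclideanSpace ℝ (Fin d) → ℂ) (s t : ℝ) :
    gk volume (uu ε f) (uu ε k) s t =
      ∫ ξ, cexp (-((ε:ℂ) + (s - t : ℝ) * I) * ((2 * Real.pi * ‖ξ‖ : ℝ) : ℂ) ^ 4) * (𝓕 (f s) ξ * (starRingEnd ℂ) (𝓕 (k t) ξ)) := by
  unfold gk uu phs
  congr 1; ext ξ
  simp only [map_mul, ← Complex.exp_conj, map_neg, map_pow, Complex.conj_ofReal, Complex.conj_I]
  have : ∀ a b c e x y : ℂ, a * (b * x) * (c * (e * y)) = (a * b * c * e) * (x * y) := by intros; ring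
  rw [this, ← Complex.exp_add, ← Complex.exp_add, ← Complex.exp_add]
  congr 2
  push_cast
  ring

end
end Stri

namespace Stri
section
set_option linter.unusedSectionVars false

lemma sum_bound (p' : ℝ) (h1 : 1 ≤ p') (h2 : p' ≤ 2) (N : ℝ → ℝ≥0∞) (hN : Measurable N) (e : ℤ → ℝ → ℝ≥0∞)
    (he : ∀ m, Measurable (e m)) (S : Finset ℤ) (hs : ∀ s, ∑ m ∈ S, e m s ≤ 1) :
    ∑ m ∈ S, ((∫⁻ s, (2 * N s * e m s ^ (1/2:ℝ)) ^ p') ^ (1/p')) ^ 2 ≤ 4 * ((∫⁻ s, N s ^ p') ^ (1/p')) ^ 2 := by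
  have hp0 : 0 < p' := by linarith
  set J := ∫⁻ s, N s ^ p' with hJ
  have key : ∀ m, ((∫⁻ s, (2 * N s * e m s ^ (1/2:ℝ)) ^ p') ^ (1/p')) ^ 2 ≤ 4 * (J ^ (2/p' - 1) * ∫⁻ s, N s ^ p' * e m s) := by
    intro m
    have a1 : ∀ s, (2 * N s * e m s ^ (1/2:ℝ)) ^ p' = 2 ^ p' * ((N s ^ p') ^ (1 - p'/2) * (N s ^ p' * e m s) ^ (p'/2)) := by
      intro s
      rw [mul_assoc, ENNReal.mul_rpow_of_nonneg _ _ hp0.le, ENNReal.mul_rpow_of_nonneg _ _ hp0.le,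
        ENNReal.mul_rpow_of_nonneg _ _ (by positivity : 0 ≤ p'/2), ← mul_assoc ((N s ^ p') ^ (1 - p'/2)),
        ← ENNReal.rpow_add_of_nonneg _ _ (by linarith) (by positivity), ← ENNReal.rpow_mul]
      rw [show 1 - p'/2 + p'/2 = 1 by ring, ENNReal.rpow_one, show 1/2*p' = p'/2 by ring]
    have hNp : Measurable (fun s => N s ^ p') := hN.pow_const _
    have a2 : ∫⁻ s, (2 * N s * e m s ^ (1/2:ℝ)) ^ p' ≤ 2 ^ p' * (J ^ (1 - p'/2) * (∫⁻ s, N s ^ p' * e m s) ^ (p'/2)) := by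
      simp_rw [a1]
      rw [lintegral_const_mul' _ _ (by simp)]
      refine mul_le_mul' le_rfl ?_
      exact ENNReal.lintegral_mul_norm_pow_le hNp.aemeasurable (hNp.mul (he m)).aemeasurable (by linarith) (by positivity) (by ring)
    have e2 : ∀ x : ℝ≥0∞, (x ^ (1/p')) ^ 2 = x ^ (2/p') := by
      intro x
      rw [← ENNReal.rpow_natCast, ← ENNReal.rpow_mul]; congr 1; push_cast; ring
    rw [e2]
    refine (ENNReal.rpow_le_rpow a2 (by positivity)).trans (le_of_eq ?_)
    have hpp : 0 ≤ 2/p' := by positivity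
    rw [ENNReal.mul_rpow_of_nonneg _ _ hpp, ENNReal.mul_rpow_of_nonneg _ _ hpp, ← ENNReal.rpow_mul, ← ENNReal.rpow_mul,
      ← ENNReal.rpow_mul, show p' * (2/p') = 2 by field_simp, show p'/2 * (2/p') = 1 by field_simp, ENNReal.rpow_one,
      show (1 - p'/2) * (2/p') = 2/p' - 1 by field_simp]
    norm_num
  refine (Finset.sum_le_sum fun m _ => key m).trans ?_
  rw [← Finset.mul_sum, ← Finset.mul_sum, ← lintegral_finsetSum (f := fun m s => N s ^ p' * e m s) _ (fun m _ => (hN.pow_const _).mul (he m))]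
  refine mul_le_mul' le_rfl ?_
  have : ∫⁻ s, ∑ m ∈ S, N s ^ p' * e m s ≤ J := by
    refine lintegral_mono fun s => ?_
    rw [← Finset.mul_sum]
    exact mul_le_of_le_one_right' (hs s)
  refine (mul_le_mul' le_rfl this).trans (le_of_eq ?_)
  have h3 : 0 ≤ 2/p' - 1 := by rw [sub_nonneg, le_div_iff₀ hp0]; linarith
  conv_lhs => rw [← ENNReal.rpow_one J]
  rw [← ENNReal.rpow_mul, ← ENNReal.rpow_add_of_nonneg _ _ (by linarith) (by norm_num), ← ENNReal.rpow_natCast, ← ENNReal.rpow_mul]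
  congr 1; push_cast; ring

variable {d : ℕ}

/-- space norm -/
noncomputable def Ns (q' : ℝ) (F : ℝ → EuclideanSpace ℝ (Fin d) → ℂ) (s : ℝ) : ℝ≥0∞ :=
  (∫⁻ x, ‖F s x‖ₑ ^ q') ^ (1/q')

lemma Ns_meas (q' : ℝ) {F : ℝ → EuclideanSpace ℝ (Fin d) → ℂ} (hF : Measurable (Function.uncurry F)) : Measurable (Ns q' F) := by
  have : Measurable (fun z : ℝ × EuclideanSpace ℝ (Fin d) => ‖F z.1 z.2‖ₑ ^ q') := (hF.enorm).pow_const _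
  exact (this.lintegral_prod_right').pow_const _

lemma Ns_lt_top (q' : ℝ) (h1 : 1 ≤ q') (h2 : q' ≤ 2) {F : ℝ → EuclideanSpace ℝ (Fin d) → ℂ} (hF : Good F) (s : ℝ) : Ns q' F s ≠ ∞ := by
  unfold Ns
  have h0 : 0 < q' := by linarith
  refine ENNReal.rpow_ne_top_of_nonneg (by positivity) ?_
  have hle : ∫⁻ x, ‖F s x‖ₑ ^ q' ≤ ∫⁻ x, (‖F s x‖ₑ + ‖F s x‖ₑ ^ 2) := by
    refine lintegral_mono fun x => ?_
    rcases le_total ‖F s x‖ₑ 1 with h | h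
    · refine le_trans ?_ (le_self_add)
      conv_rhs => rw [← ENNReal.rpow_one ‖F s x‖ₑ]
      exact ENNReal.rpow_le_rpow_of_exponent_ge h h1
    · refine le_trans ?_ (le_add_self)
      rw [← ENNReal.rpow_natCast]
      exact ENNReal.rpow_le_rpow_of_exponent_le h (by push_cast; exact h2)
  refine ne_top_of_le_ne_top ?_ hle
  have hm : Measurable (F s) := hF.meas.of_uncurry_left
  rw [lintegral_add_left hm.enorm]
  refine ENNReal.add_ne_top.2 ⟨(hF.int1 s).2.ne, ?_⟩
  rw [lint_sq]
  exact ENNReal.pow_ne_top (hF.int2 s).2.ne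

/-- space-time layer -/
noncomputable def fl (q' : ℝ) (F : ℝ → EuclideanSpace ℝ (Fin d) → ℂ) (m : ℤ) (s : ℝ) (x : EuclideanSpace ℝ (Fin d)) : ℂ :=
  layer (Ns q' F s).toReal (F s) m x

lemma fl_meas (q' : ℝ) {F : ℝ → EuclideanSpace ℝ (Fin d) → ℂ} (hF : Measurable (Function.uncurry F)) (m : ℤ) :
    Measurable (Function.uncurry (fl q' F m)) := 
  layer_meas (X := ℝ × EuclideanSpace ℝ (Fin d)) (N := fun z => (Ns q' F z.1).toReal)
    ((Ns_meas q' hF).ennreal_toReal.comp measurable_fst) (φ := Function.uncurry F) hF m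

lemma fl_good (q' : ℝ) {F : ℝ → EuclideanSpace ℝ (Fin d) → ℂ} (hF : Good F) (m : ℤ) : Good (fl q' F m) :=
  hF.mono (fl_meas q' hF.meas m) fun _ _ => layer_norm_le _ _ _ _

lemma em_meas (q' : ℝ) {F : ℝ → EuclideanSpace ℝ (Fin d) → ℂ} (hF : Measurable (Function.uncurry F)) (m : ℤ) :
    Measurable (fun s => em volume q' (Ns q' F s).toReal (F s) m) := by
  unfold em
  have h1 : Measurable (fun z : ℝ × EuclideanSpace ℝ (Fin d) => ‖F z.1 z.2‖ₑ ^ q') := (hF.enorm).pow_const _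
  have h2 : Measurable (fun z : ℝ × EuclideanSpace ℝ (Fin d) => ‖fl q' F m z.1 z.2‖ₑ ^ q') := ((fl_meas q' hF m).enorm).pow_const _
  exact h2.lintegral_prod_right'.div h1.lintegral_prod_right'

lemma fin_bound (hd : 1 ≤ d) (p p' q' : ℝ) (hp : 2 ≤ p) (hpp : 1/p + 1/p' = 1) (hq1 : 1 < q') (hq2 : q' ≤ 2)
    (hrel : 1/p = (d:ℝ)/4 * (1/q' - 1/2)) : ∃ K : ℝ≥0∞, K ≠ ∞ ∧ ∀ F : ℝ → EuclideanSpace ℝ (Fin d) → ℂ, Good F → 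
    ∀ ε > 0, ∀ S : Finset ℤ, ∫⁻ ξ, ‖∑ m ∈ S, ∫ s, uu ε (fl q' F m) s ξ‖ₑ^2 ≤ K * ((∫⁻ s, Ns q' F s ^ p') ^ (1/p')) ^ 2 := by
  obtain ⟨C, hC, hker⟩ := ker_bd d
  set σ : ℝ := (d:ℝ)/4 with hσd
  have hdpos : (0:ℝ) < d := by exact_mod_cast hd
  have hσ0 : 0 < σ := by positivity
  have hq0 : 0 < q' := by linarith
  have hp0 : 0 < p := by linarith
  have hq'inv : 1/q' < 1 := by rw [div_lt_one hq0]; exact hq1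
  have h2p : 2/p = σ * (2/q' - 1) := by
    rw [show 2/p = 2 * (1/p) by ring, hrel]; ring
  have hσ : 2/p < σ := by
    rw [h2p]
    have : 2/q' - 1 < 1 := by rw [show 2/q' = 2 * (1/q') by ring]; linarith
    nlinarith
  have hp'1 : 1 ≤ p' ∧ p' ≤ 2 := by
    have hip : 0 < 1/p := by positivity
    have hip2 : 1/p ≤ 1/2 := one_div_le_one_div_of_le (by norm_num) hp
    have h3 : 0 < 1/p' := by linarith
    have h4 : 0 < p' := by simpa using h3
    constructor
    · have : 1/p' ≤ 1 := by linarith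
      rwa [div_le_one h4] at this
    · have : 1/2 ≤ 1/p' := by linarith
      exact (one_div_le_one_div (by norm_num) h4).1 this
  set β : ℝ := q'/σ with hβd
  have hβ : 0 < β := by positivity
  refine ⟨K3 p σ C β * 4, ENNReal.mul_ne_top (K3_ne_top p σ C β hp hσ hβ) (by norm_num), ?_⟩
  intro F hF ε hε S
  set N : ℝ → ℝ := fun s => (Ns q' F s).toReal with hN
  have hNN : ∀ s, ENNReal.ofReal (N s) = Ns q' F s := fun s => ENNReal.ofReal_toReal (Ns_lt_top q' hq1.le hq2 hF s)
  have hNq : ∀ s, ∫⁻ x, ‖F s x‖ₑ ^ q' = ENNReal.ofReal (N s) ^ q' := by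
    intro s
    rw [hNN, Ns, ← ENNReal.rpow_mul, one_div_mul_cancel hq0.ne', ENNReal.rpow_one]
  have hFm : ∀ s, Measurable (F s) := fun s => hF.meas.of_uncurry_left
  have hN0 : ∀ s, 0 ≤ N s := fun s => ENNReal.toReal_nonneg
  set c : ℤ → ℝ → ℝ≥0∞ := fun m s => 2 * ENNReal.ofReal (N s) * em volume q' (N s) (F s) m ^ (1/2:ℝ) with hc
  set M : ℤ → ℝ := fun m => 2 ^ (-(β * m)) with hM
  have hM1 : ∀ m : ℤ, M m ^ (-(1/p)) = 2 ^ ((m:ℝ) * (1 - q'/2)) := by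
    intro m
    rw [hM]; simp only
    rw [← Real.rpow_mul (by norm_num), hrel, hβd]
    congr 1; field_simp
  have hM2 : ∀ m : ℤ, M m ^ ((σ - 2/p)/2) = 2 ^ ((m:ℝ) * (1 - q')) := by
    intro m
    rw [hM]; simp only
    rw [← Real.rpow_mul (by norm_num), h2p, hβd]
    congr 1; field_simp; ring
  have hNm : Measurable (fun s => ENNReal.ofReal (N s)) := (Ns_meas q' hF.meas).ennreal_toReal.ennreal_ofReal
  have main := summed (μ := volume) p p' σ C β hp hpp hσ hC hβ (fun m => uu ε (fl q' F m))
    (fun m => uu_dom ε hε hF (fl_good q' hF m) (fun s x => layer_norm_le _ _ _ _)) c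
    (fun m => (hNm.const_mul 2).mul ((em_meas q' hF.meas m).pow_const _)) M (fun m => rfl) ?_ ?_ S
  · refine main.trans ?_
    rw [mul_assoc]
    refine mul_le_mul' le_rfl ?_
    have := sum_bound p' hp'1.1 hp'1.2 (fun s => ENNReal.ofReal (N s)) hNm (fun m s => em volume q' (N s) (F s) m)
      (fun m => em_meas q' hF.meas m) S (fun s => em_sum q' (N s) hq0 (hN0 s) (F s) (hFm s) S)
    refine this.trans (le_of_eq ?_)
    simp_rw [hNN]
  · intro m s
    rw [hM1]
    refine le_trans ?_ (layer_L2 q' (N s) hq1.le hq2 (hN0 s) (F s) (hNq s) m)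
    exact ENNReal.rpow_le_rpow (uu_L2 ε hε (fl_good q' hF m) s) (by norm_num)
  · intro m l s t hst
    rw [uu_gk]
    refine (hker ε (s - t) hε (sub_ne_zero.2 hst) _ _ ((fl_good q' hF m).int1 s) ((fl_good q' hF l).int1 t)).trans ?_
    refine (mul_le_mul' le_rfl (mul_le_mul' (layer_L1 q' (N s) hq1.le (hN0 s) (F s) (hFm s) (hNq s) m)
      (layer_L1 q' (N t) hq1.le (hN0 t) (F t) (hFm t) (hNq t) l))).trans (le_of_eq ?_)
    have hMp : ∀ m, 0 ≤ M m := fun m => by rw [hM]; positivity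
    rw [Real.mul_rpow (hMp m) (hMp l), hM2, hM2, ENNReal.ofReal_mul (by positivity), ENNReal.ofReal_mul (by positivity),
      ENNReal.ofReal_mul (by positivity), ENNReal.ofReal_mul (by positivity)]
    simp only [hc]
    ring

end
end Stri

namespace Stri
section
set_option linter.unusedSectionVars false

lemma fatou2 {X : Type*} [MeasurableSpace X] {μ : Measure X} (G : ℕ → X → ℂ) (G0 : X → ℂ) (hG : ∀ n, Measurable (G n))
    (hlim : ∀ x, Filter.Tendsto (fun n => G n x) Filter.atTop (nhds (G0 x))) (B : ℝ≥0∞)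
    (hB : ∀ n, ∫⁻ x, ‖G n x‖ₑ^2 ∂μ ≤ B) : ∫⁻ x, ‖G0 x‖ₑ^2 ∂μ ≤ B := by
  have h1 : ∀ x, ‖G0 x‖ₑ^2 = Filter.liminf (fun n => ‖G n x‖ₑ^2) Filter.atTop := by
    intro x
    refine (Filter.Tendsto.liminf_eq ?_).symm
    exact ((ENNReal.continuous_pow 2).tendsto _).comp ((continuous_enorm.tendsto _).comp (hlim x))
  simp_rw [h1]
  refine (lintegral_liminf_le fun n => (hG n).enorm.pow_const 2).trans ?_
  refine Filter.liminf_le_of_le (by isBoundedDefault) ?_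
  intro b hb
  obtain ⟨n, hn⟩ := hb.exists
  exact hn.trans (hB n)

variable {d : ℕ}

/-- Fourier side of the dual operator -/
noncomputable def GF (F : ℝ → EuclideanSpace ℝ (Fin d) → ℂ) (ξ : EuclideanSpace ℝ (Fin d)) : ℂ :=
  ∫ s : ℝ, cexp (I * ((-s : ℝ) : ℂ) * phs ξ) * 𝓕 (F s) ξ

lemma eps_lim {F : ℝ → EuclideanSpace ℝ (Fin d) → ℂ} (hF : Good F) (B : ℝ≥0∞)
    (h : ∀ ε > 0, ∫⁻ ξ, ‖∫ s, uu ε F s ξ‖ₑ^2 ≤ B) : ∫⁻ ξ, ‖GF F ξ‖ₑ^2 ≤ B := by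
  refine fatou2 (fun n : ℕ => fun ξ => ∫ s, uu (1/((n:ℝ)+1)) F s ξ) _ ?_ ?_ B (fun n => h _ (by positivity))
  · intro n
    exact (uu_dom _ (by positivity) hF hF (fun _ _ => le_rfl)).Gmeas.measurable
  · intro ξ
    unfold uu GF
    simp_rw [integral_const_mul]
    have h0 := tendsto_one_div_add_atTop_nhds_zero_nat (𝕜 := ℝ)
    have hc : Continuous (fun ε : ℝ => cexp (-((ε/2 : ℝ) : ℂ) * phs ξ)) := by fun_prop
    have := ((hc.tendsto 0).comp h0).mul_const (∫ s : ℝ, cexp (I * ((-s : ℝ) : ℂ) * phs ξ) * 𝓕 (F s) ξ)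
    simpa using this

lemma layer_lim (q' : ℝ) (h1 : 1 ≤ q') (h2 : q' ≤ 2) {F : ℝ → EuclideanSpace ℝ (Fin d) → ℂ} (hF : Good F) (s : ℝ) :
    ∀ᵐ x, Filter.Tendsto (fun n : ℕ => ∑ m ∈ Finset.Icc (-(n:ℤ)) n, fl q' F m s x) Filter.atTop (nhds (F s x)) := by
  have hFm : Measurable (F s) := hF.meas.of_uncurry_left
  rcases (ENNReal.toReal_nonneg (a := Ns q' F s)).eq_or_lt with h | h
  · have hN : Ns q' F s = 0 := by
      rcases (ENNReal.toReal_eq_zero_iff _).1 h.symm with h | h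
      · exact h
      · exact absurd h (Ns_lt_top q' h1 h2 hF s)
    unfold Ns at hN
    rw [ENNReal.rpow_eq_zero_iff_of_pos (by positivity), lintegral_eq_zero_iff (hFm.enorm.pow_const _)] at hN
    filter_upwards [hN] with x hx
    have hx0 : F s x = 0 := by
      have hx' : ‖F s x‖ₑ ^ q' = 0 := hx
      rw [ENNReal.rpow_eq_zero_iff_of_pos (by positivity)] at hx'
      simpa using hx'
    unfold fl
    rw [← h, hx0]
    simp [layer_zero]
  · refine Filter.Eventually.of_forall fun x => ?_
    refine tendsto_const_nhds.congr' ?_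
    filter_upwards [layer_sum_eventually _ h (F s) x] with n hn
    exact hn.symm

lemma lim_bound (hd : 1 ≤ d) (p p' q' : ℝ) (hp : 2 ≤ p) (hpp : 1/p + 1/p' = 1) (hq1 : 1 < q') (hq2 : q' ≤ 2)
    (hrel : 1/p = (d:ℝ)/4 * (1/q' - 1/2)) : ∃ K : ℝ≥0∞, K ≠ ∞ ∧ ∀ F : ℝ → EuclideanSpace ℝ (Fin d) → ℂ, Good F → 
    ∫⁻ ξ, ‖GF F ξ‖ₑ^2 ≤ K * ((∫⁻ s, Ns q' F s ^ p') ^ (1/p')) ^ 2 := by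
  obtain ⟨K, hK, h⟩ := fin_bound hd p p' q' hp hpp hq1 hq2 hrel
  refine ⟨K, hK, fun F hF => eps_lim hF _ fun ε hε => ?_⟩
  set S : ℕ → Finset ℤ := fun n => Finset.Icc (-(n:ℤ)) n with hS
  refine fatou2 (fun n ξ => ∑ m ∈ S n, ∫ s, uu ε (fl q' F m) s ξ) _ ?_ ?_ _ (fun n => h F hF ε hε (S n))
  · intro n
    refine Finset.measurable_fun_sum _ fun m _ => ?_
    exact (uu_dom ε hε hF (fl_good q' hF m) (fun s x => layer_norm_le _ _ _ _)).Gmeas.measurable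
  · intro ξ
    have hdom : ∀ m, Dom volume (fun s => ∫ x, ‖F s x‖) (fun ξ => rexp (-(ε/2) * (2 * π * ‖ξ‖)^4)) (uu ε (fl q' F m)) := 
      fun m => uu_dom ε hε hF (fl_good q' hF m) (fun s x => layer_norm_le _ _ _ _)
    set fS : ℕ → ℝ → EuclideanSpace ℝ (Fin d) → ℂ := fun n s x => ∑ m ∈ S n, fl q' F m s x with hfS
    have hfSb : ∀ n s x, ‖fS n s x‖ ≤ ‖F s x‖ := fun n s x =>
      layer_sum_norm_le _ ENNReal.toReal_nonneg (F s) (S n) x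
    have hfSm : ∀ n, Measurable (Function.uncurry (fS n)) := fun n => by
      have : Function.uncurry (fS n) = fun z => ∑ m ∈ S n, Function.uncurry (fl q' F m) z := by
        ext z; rfl
      rw [this]
      exact Finset.measurable_fun_sum _ fun m _ => fl_meas q' hF.meas m
    have hfSg : ∀ n, Good (fS n) := fun n => hF.mono (hfSm n) (hfSb n)
    have hdomS : ∀ n, Dom volume (fun s => ∫ x, ‖F s x‖) (fun ξ => rexp (-(ε/2) * (2 * π * ‖ξ‖)^4)) (uu ε (fS n)) := 
      fun n => uu_dom ε hε hF (hfSg n) (hfSb n)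
    have hsum : ∀ n, ∑ m ∈ S n, ∫ s, uu ε (fl q' F m) s ξ = ∫ s, uu ε (fS n) s ξ := by
      intro n
      rw [← integral_finsetSum _ fun m _ => (hdom m).int_t ξ]
      congr 1; ext s
      unfold uu
      rw [← Finset.mul_sum, ← Finset.mul_sum]
      congr 2
      simp only [Real.fourier_eq']
      rw [← integral_finsetSum]
      · congr 1; ext x
        simp only [hfS, Finset.smul_sum]
      · intro m _
        have hcont : Continuous (fun v : EuclideanSpace ℝ (Fin d) => cexp (↑(-2 * π * ⟪v, ξ⟫) * I)) := by fun_prop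
        refine ((fl_good q' hF m).int1 s).mono
          (hcont.measurable.smul (fl_good q' hF m).meas.of_uncurry_left).aestronglyMeasurable
          (Filter.Eventually.of_forall fun x => le_of_eq ?_)
        rw [norm_smul, Complex.norm_exp_ofReal_mul_I, one_mul]
    simp_rw [hsum]
    refine tendsto_integral_of_dominated_convergence (fun s => (∫ x, ‖F s x‖) * rexp (-(ε/2) * (2 * π * ‖ξ‖)^4))
      (fun n => ((hdomS n).meas_xi ξ).aestronglyMeasurable) (hF.int.norm.integral_prod_left.mul_const _)
      (fun n => Filter.Eventually.of_forall fun s => (hdomS n).bd s ξ) (Filter.Eventually.of_forall fun s => ?_)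
    unfold uu
    refine Filter.Tendsto.const_mul _ (Filter.Tendsto.const_mul _ ?_)
    simp only [Real.fourier_eq']
    have hcont : Continuous (fun v : EuclideanSpace ℝ (Fin d) => cexp (↑(-2 * π * ⟪v, ξ⟫) * I)) := by fun_prop
    refine tendsto_integral_of_dominated_convergence (fun x => ‖F s x‖)
      (fun n => (hcont.measurable.smul (hfSm n).of_uncurry_left).aestronglyMeasurable) (hF.int1 s).norm
      (fun n => Filter.Eventually.of_forall fun x => ?_) ?_
    · rw [norm_smul, Complex.norm_exp_ofReal_mul_I, one_mul]
      exact hfSb n s x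
    · filter_upwards [layer_lim q' hq1.le hq2 hF s] with x hx
      exact Filter.Tendsto.const_smul hx _

/-- the case `p = ∞` -/
lemma inf_bound (F : ℝ → EuclideanSpace ℝ (Fin d) → ℂ) (hF : Good F) :
    ∫⁻ ξ, ‖GF F ξ‖ₑ^2 ≤ (∫⁻ s, Ns 2 F s) ^ 2 := by
  refine eps_lim hF _ fun ε hε => ?_
  have hD := uu_dom ε hε hF hF (fun _ _ => le_rfl)
  rw [gram_sq hD]
  refine (enorm_integral_le_lintegral_enorm _).trans ?_
  have hm := Ns_meas 2 hF.meas
  calc ∫⁻ z : ℝ × ℝ, ‖gk volume (uu ε F) (uu ε F) z.1 z.2‖ₑ ≤ ∫⁻ z : ℝ × ℝ, Ns 2 F z.1 * Ns 2 F z.2 := by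
        refine lintegral_mono fun z => ?_
        refine (gk_cs hD hD z.1 z.2).trans ?_
        have : ∀ s, (∫⁻ ξ, ‖uu ε F s ξ‖ₑ^2)^(1/2:ℝ) ≤ Ns 2 F s := fun s => by
          unfold Ns
          refine ENNReal.rpow_le_rpow ((uu_L2 ε hε hF s).trans (le_of_eq ?_)) (by norm_num)
          simp
        exact mul_le_mul' (this _) (this _)
    _ = _ := by
      rw [sq, Measure.volume_eq_prod, lintegral_prod_mul hm.aemeasurable hm.aemeasurable]
end
end Stri

namespace Stri
section
set_option linter.unusedSectionVars false
variable {d : ℕ}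

lemma slice_deriv (F : 𝓢(ℝ × EuclideanSpace ℝ (Fin d), ℂ)) (s : ℝ) (n : ℕ) (y : EuclideanSpace ℝ (Fin d)) :
    ‖iteratedFDeriv ℝ n (fun y => F (s, y)) y‖ ≤ ‖iteratedFDeriv ℝ n F (s, y)‖ := by
  have e : (fun y => F (s, y)) = (fun z => F ((s, (0:EuclideanSpace ℝ (Fin d))) + z)) ∘ (ContinuousLinearMap.inr ℝ ℝ (EuclideanSpace ℝ (Fin d))) := by
    ext y; simp
  have hs : ContDiff ℝ n (fun z => F ((s, (0:EuclideanSpace ℝ (Fin d))) + z)) :=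
    (F.smooth n).comp (contDiff_const.add contDiff_id)
  rw [e, ContinuousLinearMap.iteratedFDeriv_comp_right _ hs y le_rfl]
  refine (ContinuousMultilinearMap.norm_compContinuousLinearMap_le _ _).trans ?_
  rw [iteratedFDeriv_comp_add_left]
  have h1 : ‖ContinuousLinearMap.inr ℝ ℝ (EuclideanSpace ℝ (Fin d))‖ ≤ 1 := ContinuousLinearMap.norm_inr_le_one _ _ _
  have h2 : ∏ i : Fin n, ‖ContinuousLinearMap.inr ℝ ℝ (EuclideanSpace ℝ (Fin d))‖ ≤ 1 :=
    Finset.prod_le_one (fun _ _ => norm_nonneg _) (fun _ _ => h1)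
  have h3 : (s, (0:EuclideanSpace ℝ (Fin d))) + ContinuousLinearMap.inr ℝ ℝ (EuclideanSpace ℝ (Fin d)) y = (s, y) := by simp
  rw [h3]
  exact mul_le_of_le_one_right (norm_nonneg _) h2

lemma slice_bd (F : 𝓢(ℝ × EuclideanSpace ℝ (Fin d), ℂ)) (k n : ℕ) : ∃ C : ℝ, 0 ≤ C ∧ ∀ s y,
    ‖y‖^k * ‖iteratedFDeriv ℝ n (fun y => F (s, y)) y‖ ≤ C * (1 + s^2)⁻¹ := by
  set C := 2 ^ (k+2) * (Finset.Iic (k+2, n)).sup (fun m => SchwartzMap.seminorm ℝ m.1 m.2) F with hC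
  refine ⟨C, by positivity, fun s y => ?_⟩
  have h := SchwartzMap.one_add_le_sup_seminorm_apply (𝕜 := ℝ) (m := (k+2, n)) (k := k+2) (n := n) le_rfl le_rfl F (s, y)
  rw [← div_eq_mul_inv, le_div_iff₀ (by positivity)]
  refine le_trans ?_ h
  have h1 : ‖y‖ ≤ ‖(s, y)‖ := norm_snd_le (s, y)
  have h2 : |s| ≤ ‖(s, y)‖ := norm_fst_le (s, y)
  have h3 : 1 + s^2 ≤ (1 + ‖(s,y)‖)^2 := by
    rw [← sq_abs s]; nlinarith [abs_nonneg s, norm_nonneg (s, y)]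
  have h4 : ‖y‖^k ≤ (1 + ‖(s,y)‖)^k := pow_le_pow_left₀ (norm_nonneg _) (by linarith) _
  calc ‖y‖^k * ‖iteratedFDeriv ℝ n (fun y => F (s, y)) y‖ * (1 + s^2) 
      ≤ (1 + ‖(s,y)‖)^k * ‖iteratedFDeriv ℝ n F (s, y)‖ * (1 + ‖(s,y)‖)^2 := by
        gcongr
        exact slice_deriv F s n y
    _ = _ := by ring

/-- time slice of a Schwartz function -/
noncomputable def slice (F : 𝓢(ℝ × EuclideanSpace ℝ (Fin d), ℂ)) (s : ℝ) : 𝓢(EuclideanSpace ℝ (Fin d), ℂ) where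
  toFun := fun y => F (s, y)
  smooth' := F.smooth'.comp (contDiff_const.prodMk contDiff_id)
  decay' := fun k n => by
    obtain ⟨C, _, h⟩ := slice_bd F k n
    exact ⟨_, h s⟩

lemma slice_coe (F : 𝓢(ℝ × EuclideanSpace ℝ (Fin d), ℂ)) (s : ℝ) : ⇑(slice F s) = fun y => F (s, y) := rfl

lemma sup_bd {V ι : Type*} [AddCommGroup V] [Module ℂ V] (p : ι → Seminorm ℂ V) (f : ℝ → V) (w : ℝ → ℝ) (hw : ∀ s, 0 ≤ w s)
    (h : ∀ i, ∃ C : ℝ, 0 ≤ C ∧ ∀ s, p i (f s) ≤ C * w s) (S : Finset ι) : ∃ C : ℝ, 0 ≤ C ∧ ∀ s, (S.sup p) (f s) ≤ C * w s := by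
  choose C hC h using h
  refine ⟨∑ i ∈ S, C i, Finset.sum_nonneg fun i _ => hC i, fun s => ?_⟩
  refine Seminorm.finset_sup_apply_le (mul_nonneg (Finset.sum_nonneg fun i _ => hC i) (hw s)) fun i hi => (h i s).trans ?_
  exact mul_le_mul_of_nonneg_right (Finset.single_le_sum (fun i _ => hC i) hi) (hw s)

lemma slice_fourier (F : 𝓢(ℝ × EuclideanSpace ℝ (Fin d), ℂ)) : ∃ C : ℝ, 0 ≤ C ∧ ∀ s ξ,
    ‖𝓕 (fun y => F (s, y)) ξ‖ ≤ C * (1 + s^2)⁻¹ * (1 + ‖ξ‖)^(-((d:ℝ)+1)) := by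
  have hw : ∀ s : ℝ, 0 ≤ (1 + s^2)⁻¹ := fun s => by positivity
  have h1 : ∀ m : ℕ × ℕ, ∃ C : ℝ, 0 ≤ C ∧ ∀ s, schwartzSeminormFamily ℂ (EuclideanSpace ℝ (Fin d)) ℂ m (slice F s) ≤ C * (1 + s^2)⁻¹ := by
    intro m
    obtain ⟨C, hC, h⟩ := slice_bd F m.1 m.2
    exact ⟨C, hC, fun s => SchwartzMap.seminorm_le_bound ℂ m.1 m.2 (slice F s) (by positivity) (h s)⟩
  have h2 : ∀ m : ℕ × ℕ, ∃ C : ℝ, 0 ≤ C ∧ ∀ s, schwartzSeminormFamily ℂ (EuclideanSpace ℝ (Fin d)) ℂ m 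
      (FourierTransform.fourierCLM ℂ 𝓢(EuclideanSpace ℝ (Fin d), ℂ) (slice F s)) ≤ C * (1 + s^2)⁻¹ := by
    intro m
    set L := FourierTransform.fourierCLM ℂ 𝓢(EuclideanSpace ℝ (Fin d), ℂ) with hL
    obtain ⟨S, C, _, h⟩ := Seminorm.bound_of_continuous (schwartz_withSeminorms ℂ (EuclideanSpace ℝ (Fin d)) ℂ)
      ((schwartzSeminormFamily ℂ (EuclideanSpace ℝ (Fin d)) ℂ m).comp L.toLinearMap)
      (((schwartz_withSeminorms ℂ (EuclideanSpace ℝ (Fin d)) ℂ).continuous_seminorm m).comp L.continuous)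
    obtain ⟨C', hC', h'⟩ := sup_bd _ (slice F) _ hw h1 S
    refine ⟨C * C', by positivity, fun s => (h (slice F s)).trans ?_⟩
    rw [mul_assoc]
    exact mul_le_mul_of_nonneg_left (h' s) C.2
  obtain ⟨C, hC, h⟩ := sup_bd _ (fun s => FourierTransform.fourierCLM ℂ 𝓢(EuclideanSpace ℝ (Fin d), ℂ) (slice F s)) _ hw h2 (Finset.Iic (d+1, 0))
  refine ⟨2^(d+1) * C, by positivity, fun s ξ => ?_⟩
  have h3 := SchwartzMap.one_add_le_sup_seminorm_apply (𝕜 := ℂ) (m := (d+1, 0)) (k := d+1) (n := 0) le_rfl le_rfl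
    (FourierTransform.fourierCLM ℂ 𝓢(EuclideanSpace ℝ (Fin d), ℂ) (slice F s)) ξ
  have h4 := h3.trans (mul_le_mul_of_nonneg_left (h s) (by positivity))
  rw [norm_iteratedFDeriv_zero] at h4
  have h5 : (FourierTransform.fourierCLM ℂ 𝓢(EuclideanSpace ℝ (Fin d), ℂ) (slice F s)) ξ = 𝓕 (fun y => F (s, y)) ξ := by
    rw [FourierTransform.fourierCLM_apply, SchwartzMap.fourier_coe, slice_coe]
  rw [h5] at h4
  rw [Real.rpow_neg (by positivity), ← div_eq_mul_inv, le_div_iff₀ (by positivity), mul_comm]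
  have h6 : (1 + ‖ξ‖) ^ ((d:ℝ)+1) = (1 + ‖ξ‖)^(d+1) := by
    rw [← Real.rpow_natCast]; push_cast; rfl
  rw [h6]
  refine h4.trans (le_of_eq ?_)
  ring

lemma schwartz_good (F : 𝓢(ℝ × EuclideanSpace ℝ (Fin d), ℂ)) : Good (fun s y => F (s, y)) where
  meas := F.continuous.measurable
  int := by
    haveI : (volume : Measure (ℝ × EuclideanSpace ℝ (Fin d))).IsAddHaarMeasure :=
      Measure.prod.instIsAddHaarMeasure (volume : Measure ℝ) (volume : Measure (EuclideanSpace ℝ (Fin d)))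
    exact F.integrable
  int1 := fun s => (slice F s).integrable
  int2 := fun s => (slice F s).memLp 2 volume

lemma final_link (F : 𝓢(ℝ × EuclideanSpace ℝ (Fin d), ℂ)) :
    eLpNorm (fun x => ∫ s : ℝ, ∫ ξ : EuclideanSpace ℝ (Fin d),
    Complex.exp (2 * Real.pi * Complex.I * ((⟪x, ξ⟫ : ℝ) : ℂ)) *
      Complex.exp (Complex.I * ((-s : ℝ) : ℂ) * ((2 * Real.pi * ‖ξ‖ : ℝ) : ℂ) ^ 4) * 𝓕 (fun y => F (s, y)) ξ) 2 volume =
    eLpNorm (GF (fun s y => F (s, y))) 2 volume := by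
  obtain ⟨C, hC, hb⟩ := slice_fourier F
  have hg := schwartz_good F
  have hwi : Integrable (fun s : ℝ => C * (1 + s^2)⁻¹) := integrable_inv_one_add_sq.const_mul C
  have hxi : Integrable (fun ξ : EuclideanSpace ℝ (Fin d) => (1 + ‖ξ‖)^(-((d:ℝ)+1))) :=
    integrable_one_add_norm (by simp)
  have hprod := hwi.mul_prod hxi
  set v : ℝ → EuclideanSpace ℝ (Fin d) → ℂ := fun s ξ => cexp (I * ((-s : ℝ) : ℂ) * phs ξ) * 𝓕 (fun y => F (s, y)) ξ with hv
  have hvm : Measurable (Function.uncurry v) := by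
    have := uu_meas 0 hg.meas
    have e : Function.uncurry v = Function.uncurry (uu 0 fun s y => F (s, y)) := by
      ext z; simp [hv, uu, Function.uncurry]
    rw [e]; exact this
  have hvb : ∀ s ξ, ‖v s ξ‖ ≤ C * (1 + s^2)⁻¹ * (1 + ‖ξ‖)^(-((d:ℝ)+1)) := fun s ξ => by
    simp only [hv]
    rw [norm_mul, norm_osc, one_mul]; exact hb s ξ
  have hvi : Integrable (Function.uncurry v) :=
    hprod.mono' hvm.aestronglyMeasurable (Filter.Eventually.of_forall fun z => hvb z.1 z.2)
  have hGi : Integrable (GF (fun s y => F (s, y))) := hvi.integral_prod_right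
  have hGm : StronglyMeasurable (GF (fun s y => F (s, y))) := hvm.stronglyMeasurable.integral_prod_left'
  have hGb : ∀ ξ, ‖GF (fun s y => F (s, y)) ξ‖ ≤ (∫ s : ℝ, C * (1 + s^2)⁻¹) * (1 + ‖ξ‖)^(-((d:ℝ)+1)) := fun ξ => by
    rw [← integral_mul_const]
    exact norm_integral_le_of_norm_le (hwi.mul_const _) (Filter.Eventually.of_forall fun s => hvb s ξ)
  have hA : 0 ≤ ∫ s : ℝ, C * (1 + s^2)⁻¹ := integral_nonneg fun s => by positivity
  have hG2 : MemLp (GF (fun s y => F (s, y))) 2 := by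
    rw [memLp_two_iff_integrable_sq_norm hGm.aestronglyMeasurable]
    refine (hxi.const_mul ((∫ s : ℝ, C * (1 + s^2)⁻¹)^2)).mono' (hGm.norm.pow 2).aestronglyMeasurable
      (Filter.Eventually.of_forall fun ξ => ?_)
    rw [Real.norm_of_nonneg (by positivity)]
    have h1 : (1 + ‖ξ‖)^(-((d:ℝ)+1)) ≤ 1 := Real.rpow_le_one_of_one_le_of_nonpos (by linarith [norm_nonneg ξ]) (by linarith [(Nat.cast_nonneg d : (0:ℝ) ≤ d)])
    have h0 : 0 ≤ (1 + ‖ξ‖)^(-((d:ℝ)+1)) := by positivity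
    calc ‖GF (fun s y => F (s, y)) ξ‖^2 ≤ ((∫ s : ℝ, C * (1 + s^2)⁻¹) * (1 + ‖ξ‖)^(-((d:ℝ)+1)))^2 :=
          pow_le_pow_left₀ (norm_nonneg _) (hGb ξ) 2
      _ = (∫ s : ℝ, C * (1 + s^2)⁻¹)^2 * ((1 + ‖ξ‖)^(-((d:ℝ)+1)) * (1 + ‖ξ‖)^(-((d:ℝ)+1))) := by ring
      _ ≤ (∫ s : ℝ, C * (1 + s^2)⁻¹)^2 * (1 * (1 + ‖ξ‖)^(-((d:ℝ)+1))) := by gcongr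
      _ = _ := by rw [one_mul]
  rw [← plancherel_inv _ hGi hG2]
  congr 1
  ext x
  rw [Real.fourierInv_eq']
  have hcont : Continuous (fun ξ : EuclideanSpace ℝ (Fin d) => cexp (↑(2 * π * ⟪ξ, x⟫) * I)) := by fun_prop
  have e1 : ∀ s ξ, Complex.exp (2 * Real.pi * Complex.I * ((⟪x, ξ⟫ : ℝ) : ℂ)) *
      Complex.exp (Complex.I * ((-s : ℝ) : ℂ) * ((2 * Real.pi * ‖ξ‖ : ℝ) : ℂ) ^ 4) * 𝓕 (fun y => F (s, y)) ξ =
      cexp (↑(2 * π * ⟪ξ, x⟫) * I) * v s ξ := by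
    intro s ξ
    rw [hv, mul_assoc]
    congr 2
    rw [real_inner_comm]; push_cast; ring
  simp_rw [e1]
  rw [integral_integral_swap]
  · congr 1; ext ξ
    rw [integral_const_mul]; rfl
  · refine hvi.mono ((hcont.measurable.comp measurable_snd).mul hvm).aestronglyMeasurable (Filter.Eventually.of_forall fun z => le_of_eq ?_)
    simp only [Function.uncurry, norm_mul, Complex.norm_exp_ofReal_mul_I, one_mul]

end
end Stri

namespace Stri
section

lemma conj_real (a b : ℝ≥0∞) (ha : 2 ≤ a) (h : 1/a + 1/b = 1) : b ≠ ∞ ∧ b ≠ 0 ∧ 1/a.toReal + 1/b.toReal = 1 := by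
  have hb0 : b ≠ 0 := by
    rintro rfl
    simp at h
  have ha0 : a ≠ 0 := by rintro rfl; simp at ha
  have hbt : b ≠ ∞ := by
    rintro rfl
    simp at h
    rw [h] at ha
    norm_num at ha
  refine ⟨hbt, hb0, ?_⟩
  have := congrArg ENNReal.toReal h
  rw [ENNReal.toReal_add (by simp [ha0]) (by simp [hb0])] at this
  simpa using this

lemma sqrt_step (A X K : ℝ≥0∞) (hK : K ≠ ∞) (h : A ^ 2 ≤ K * X ^ 2) :
    A ≤ ENNReal.ofReal ((K ^ (1/2:ℝ)).toReal + 1) * X := by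
  have h1 := ENNReal.rpow_le_rpow h (by norm_num : (0:ℝ) ≤ 1/2)
  rw [ENNReal.mul_rpow_of_nonneg _ _ (by norm_num), ← ENNReal.rpow_natCast, ← ENNReal.rpow_natCast, ← ENNReal.rpow_mul,
    ← ENNReal.rpow_mul] at h1
  norm_num at h1
  refine h1.trans (mul_le_mul' ?_ le_rfl)
  have h2 : K ^ (1/2:ℝ) ≠ ∞ := ENNReal.rpow_ne_top_of_nonneg (by norm_num) hK
  calc K ^ (1/2:ℝ) = ENNReal.ofReal ((K ^ (1/2:ℝ)).toReal) := (ENNReal.ofReal_toReal h2).symm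
    _ ≤ _ := ENNReal.ofReal_le_ofReal (by linarith)

lemma main_bd {d : ℕ} (hd : 1 ≤ d) (p q p' q' : ℝ≥0∞) (h2p : 2 ≤ p) (h2q : 2 ≤ q) (hq : q ≠ ∞)
    (hγ : (d : ℝ) / 2 - (d : ℝ) / q.toReal - 4 / p.toReal = 0)
    (hp' : 1 / p + 1 / p' = 1) (hq' : 1 / q + 1 / q' = 1) :
    ∃ K : ℝ≥0∞, K ≠ ∞ ∧ ∀ F : ℝ → EuclideanSpace ℝ (Fin d) → ℂ, Good F → 
    ∫⁻ ξ, ‖GF F ξ‖ₑ^2 ≤ K * ((∫⁻ s, Ns q'.toReal F s ^ p'.toReal) ^ (1/p'.toReal)) ^ 2 := by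
  obtain ⟨hp't, hp'0, ep⟩ := conj_real p p' h2p hp'
  obtain ⟨hq't, hq'0, eq⟩ := conj_real q q' h2q hq'
  have hdpos : (0:ℝ) < d := by exact_mod_cast hd
  have hQ : 2 ≤ q.toReal := by simpa using ENNReal.toReal_mono hq h2q
  by_cases hp : p = ∞
  · subst hp
    have e1 : p'.toReal = 1 := by simpa using ep
    have e2 : q.toReal = 2 := by
      simp at hγ
      have : (d:ℝ) / 2 = d / q.toReal := by linarith
      field_simp at this
      linarith
    have e3 : q'.toReal = 2 := by
      rw [e2] at eq
      have : (1:ℝ) / q'.toReal = 1/2 := by linarith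
      simpa using this
    refine ⟨1, by simp, fun F hF => ?_⟩
    rw [e1, e3]
    simpa using inf_bound F hF
  · have hP : 2 ≤ p.toReal := by simpa using ENNReal.toReal_mono hp h2p
    have hQi : 0 < 1/q.toReal := by positivity
    have hQi2 : 1/q.toReal ≤ 1/2 := one_div_le_one_div_of_le (by norm_num) hQ
    have hq'p : 0 < q'.toReal := ENNReal.toReal_pos hq'0 hq't
    have h1 : 1 < q'.toReal := by
      have : 1/q'.toReal < 1 := by linarith
      rwa [div_lt_one hq'p] at this
    have h2 : q'.toReal ≤ 2 := by
      have : 1/2 ≤ 1/q'.toReal := by linarith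
      exact (one_div_le_one_div (by norm_num) hq'p).1 this
    refine lim_bound hd p.toReal p'.toReal q'.toReal hP ep h1 h2 ?_
    have e4 : 1/q'.toReal = 1 - 1/q.toReal := by linarith
    rw [e4]
    have e5 : 4 * (1/p.toReal) = d/2 - d * (1/q.toReal) := by
      have : 4 / p.toReal = 4 * (1/p.toReal) := by ring
      rw [← this]
      have : (d:ℝ) / q.toReal = d * (1/q.toReal) := by ring
      rw [← this]; linarith
    linarith
end
end Stri

/-- the dual (adjoint) Strichartz estimate
`‖∫_ℝ e^{-isΔ²} F(s,·) ds‖_{L²} ≤ C ‖F‖_{L^{p'}(ℝ,L^{q'})}`. -/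
theorem stmt5 (d : ℕ) (hd : 1 ≤ d) (p q p' q' : ℝ≥0∞)
    (hpq : Admissible d p q) (hq : q ≠ ∞) (hγ : gammaExp d p q = 0)
    (hp' : 1 / p + 1 / p' = 1) (hq' : 1 / q + 1 / q' = 1) :
    ∃ C > (0 : ℝ), ∀ F : 𝓢(ℝ × EuclideanSpace ℝ (Fin d), ℂ),
      eLpNorm (fun x => ∫ s : ℝ, prop4 (-s) (fun y => F (s, y)) x) 2
          MeasureTheory.volume ≤
        ENNReal.ofReal C * mixedLp p' q' Set.univ (fun s y => F (s, y)) := by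
  obtain ⟨h2p, h2q, _, _⟩ := hpq
  obtain ⟨hp't, hp'0, _⟩ := Stri.conj_real p p' h2p hp'
  obtain ⟨hq't, hq'0, _⟩ := Stri.conj_real q q' h2q hq'
  obtain ⟨K, hK, h⟩ := Stri.main_bd hd p q p' q' h2p h2q hq hγ hp' hq'
  refine ⟨(K ^ (1/2:ℝ)).toReal + 1, by positivity, fun F => ?_⟩
  have hX : mixedLp p' q' Set.univ (fun s y => F (s, y)) =
      (∫⁻ s, Stri.Ns q'.toReal (fun s y => F (s, y)) s ^ p'.toReal) ^ (1/p'.toReal) := by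
    unfold mixedLp timeLp
    rw [if_neg hp't, Measure.restrict_univ]
    simp_rw [eLpNorm_eq_lintegral_rpow_enorm_toReal hq'0 hq't]
    rfl
  rw [hX]
  have hL := Stri.final_link F
  unfold prop4
  rw [hL]
  refine Stri.sqrt_step _ _ K hK ?_
  rw [← Stri.lint_sq]
  exact h _ (Stri.schwartz_good F)
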